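/- arXiv:1405.4688 — 2 statements merged into one kernel-verified Lean document; each statement's English description precedes it below -/
import Mathlib

section
/- Let 0 < p ≤ 1 and λ ∈ [0,1]. The map (A, B) ↦ [B^{1/2}(λ(B^{-1/2}AB^{-1/2})^p + (1-λ)I)^{1/p}B^{1/2}]^{1-p} is jointly concave on pairs of n×n positive definite complex matrices (in the Loewner order), where the outer power (1-p) is again taken by the functional calculus of the (positive definite) inner expression. -/
open Matrix
open scoped ComplexOrder

/-- Matrix power by a real exponent via the functional calculus
(unitary diagonalization for Hermitian matrices; junk value otherwise). -/
noncomputable def mpow {n : ℕ} (A : Matrix (Fin n) (Fin n) ℂ) (q : ℝ) :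
    Matrix (Fin n) (Fin n) ℂ :=
  if hA : A.IsHermitian then
    (hA.eigenvectorUnitary : Matrix (Fin n) (Fin n) ℂ) *
      Matrix.diagonal (fun i => ((hA.eigenvalues i ^ q : ℝ) : ℂ)) *
      (star (hA.eigenvectorUnitary : Matrix (Fin n) (Fin n) ℂ))
  else 0

/-- The perspective map
`(A,B) ↦ B^{1/2}(λ(B^{-1/2}AB^{-1/2})^p + (1-λ)I)^{1/p}B^{1/2}`. -/
noncomputable def persp2 {n : ℕ} (lam p : ℝ) (A B : Matrix (Fin n) (Fin n) ℂ) :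
    Matrix (Fin n) (Fin n) ℂ :=
  mpow B (1 / 2) *
    mpow (lam • mpow (mpow B (-(1 / 2)) * A * mpow B (-(1 / 2))) p + (1 - lam) • 1)
      (1 / p) *
    mpow B (1 / 2)

open MeasureTheory Set Filter Topology

section PowerMean
variable {𝒜 : Type*} [CStarAlgebra 𝒜] [PartialOrder 𝒜] [StarOrderedRing 𝒜]

/-- Kernel of the geometric mean (a rescaled parallel sum). -/
noncomputable def pmH (t : ℝ) (X A : 𝒜) : 𝒜 := X - t • (X * Ring.inverse (t • X + A) * X)

lemma pm_sp_smul {t : ℝ} (ht : 0 < t) {X : 𝒜} (hX : IsStrictlyPositive X) :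
    IsStrictlyPositive (t • X) :=
  IsStrictlyPositive.smul ht hX

lemma pm_sp_comb {t : ℝ} (ht : 0 ≤ t) (ht1 : t ≤ 1) {X Y : 𝒜} (hX : IsStrictlyPositive X)
    (hY : IsStrictlyPositive Y) : IsStrictlyPositive (t • X + (1 - t) • Y) := by
  rcases ht.eq_or_lt with rfl | h
  · simpa using hY
  · exact (pm_sp_smul h hX).add_nonneg (smul_nonneg (by linarith) hY.nonneg)

lemma pmH_diff {t : ℝ} (ht : 0 < t) {X A : 𝒜} (hX : IsStrictlyPositive X)
    (hA : IsStrictlyPositive A) (Z : 𝒜) :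
    star (1 - t • Z) * X * (1 - t • Z) + t • (star Z * A * Z) - pmH t X A =
      t • (star (X - (t • X + A) * Z) * Ring.inverse (t • X + A) * (X - (t • X + A) * Z)) := by
  have hC : IsStrictlyPositive (t • X + A) := (pm_sp_smul ht hX).add_nonneg hA.nonneg
  have hXs : star X = X := hX.isSelfAdjoint.star_eq
  have hCs : star (t • X + A) = t • X + A := hC.isSelfAdjoint.star_eq
  have h1 : Ring.inverse (t • X + A) * (t • X + A) = 1 := Ring.inverse_mul_cancel _ hC.isUnit
  have h2 : (t • X + A) * Ring.inverse (t • X + A) = 1 := Ring.mul_inverse_cancel _ hC.isUnit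
  have e : star (X - (t • X + A) * Z) * Ring.inverse (t • X + A) * (X - (t • X + A) * Z)
      = X * Ring.inverse (t • X + A) * X - X * Z - star Z * X
        + star Z * (t • X + A) * Z := by
    rw [star_sub, star_mul, hXs, hCs]
    set C := t • X + A
    set R := Ring.inverse C
    have : (X - star Z * C) * R * (X - C * Z) = X * R * X - X * (R * C) * Z
        - star Z * (C * R) * X + star Z * (C * R) * C * Z := by noncomm_ring
    rw [this, h1, h2]; noncomm_ring
  rw [e, pmH]
  simp only [star_sub, star_one, star_smul, star_trivial, mul_sub, sub_mul, mul_add, add_mul,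
    one_mul, mul_one, smul_mul_assoc, mul_smul_comm, smul_add, smul_sub, smul_smul]
  abel

lemma pmH_le {t : ℝ} (ht : 0 < t) {X A : 𝒜} (hX : IsStrictlyPositive X)
    (hA : IsStrictlyPositive A) (Z : 𝒜) :
    pmH t X A ≤ star (1 - t • Z) * X * (1 - t • Z) + t • (star Z * A * Z) := by
  rw [← sub_nonneg, pmH_diff ht hX hA]
  have hC : IsStrictlyPositive (t • X + A) := (pm_sp_smul ht hX).add_nonneg hA.nonneg
  exact smul_nonneg ht.le (star_left_conjugate_nonneg hC.ringInverse.nonneg _)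

lemma pmH_eq {t : ℝ} (ht : 0 < t) {X A : 𝒜} (hX : IsStrictlyPositive X)
    (hA : IsStrictlyPositive A) : ∃ Z : 𝒜,
    pmH t X A = star (1 - t • Z) * X * (1 - t • Z) + t • (star Z * A * Z) := by
  have hC : IsStrictlyPositive (t • X + A) := (pm_sp_smul ht hX).add_nonneg hA.nonneg
  refine ⟨Ring.inverse (t • X + A) * X, ?_⟩
  symm
  rw [← sub_eq_zero, pmH_diff ht hX hA, ← mul_assoc, Ring.mul_inverse_cancel _ hC.isUnit]
  simp

lemma pmH_mono {t : ℝ} (ht : 0 < t) {X X' A : 𝒜} (hX : IsStrictlyPositive X)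
    (hA : IsStrictlyPositive A) (h : X ≤ X') : pmH t X A ≤ pmH t X' A := by
  have hX' : IsStrictlyPositive X' := hX.of_le h
  obtain ⟨Z, hZ⟩ := pmH_eq ht hX' hA
  rw [hZ]
  refine (pmH_le ht hX hA Z).trans ?_
  gcongr
  exact star_left_conjugate_le_conjugate h _

lemma pmH_concave {t : ℝ} (ht : 0 < t) {X Y A B : 𝒜} (hX : IsStrictlyPositive X)
    (hA : IsStrictlyPositive A) (hY : IsStrictlyPositive Y)
    (hB : IsStrictlyPositive B) {a : ℝ} (ha : 0 ≤ a) (ha1 : a ≤ 1) :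
    a • pmH t X A + (1 - a) • pmH t Y B ≤
      pmH t (a • X + (1 - a) • Y) (a • A + (1 - a) • B) := by
  obtain ⟨Z, hZ⟩ := pmH_eq ht (pm_sp_comb ha ha1 hX hY) (pm_sp_comb ha ha1 hA hB)
  rw [hZ]
  have h1 := smul_le_smul_of_nonneg_left (pmH_le ht hX hA Z) ha
  have h2 := smul_le_smul_of_nonneg_left (pmH_le ht hY hB Z) (sub_nonneg.2 ha1)
  refine (add_le_add h1 h2).trans (le_of_eq ?_)
  simp only [smul_add, mul_add, add_mul, smul_mul_assoc, mul_smul_comm, smul_comm t]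
  abel

lemma pmH_congr (t : ℝ) {S : 𝒜} (hS : IsUnit S) (X A : 𝒜) (hC : IsUnit (t • X + A)) :
    pmH t (S * X * star S) (S * A * star S) = S * pmH t X A * star S := by
  have e : t • (S * X * star S) + S * A * star S = S * (t • X + A) * star S := by
    simp only [mul_add, add_mul, smul_mul_assoc, mul_smul_comm]
  have hSs : IsUnit (star S) := hS.star
  have ei : Ring.inverse (S * (t • X + A) * star S) =
      Ring.inverse (star S) * Ring.inverse (t • X + A) * Ring.inverse S := by
    obtain ⟨s, rfl⟩ := hS
    obtain ⟨c, hc⟩ := hC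
    rw [← hc, ← Units.coe_star, ← Units.val_mul, ← Units.val_mul]
    rw [Ring.inverse_unit, Ring.inverse_unit, Ring.inverse_unit, Ring.inverse_unit,
      _root_.mul_inv_rev, _root_.mul_inv_rev]
    simp only [Units.val_mul, mul_assoc]
  have h1 : Ring.inverse S * S = 1 := Ring.inverse_mul_cancel _ hS
  have h2 : star S * Ring.inverse (star S) = 1 := Ring.mul_inverse_cancel _ hSs
  rw [pmH, e, ei, pmH]
  have : S * X * star S * (Ring.inverse (star S) * Ring.inverse (t • X + A) * Ring.inverse S)
      * (S * X * star S) = S * X * (star S * Ring.inverse (star S)) * Ring.inverse (t • X + A)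
        * (Ring.inverse S * S) * X * star S := by simp only [mul_assoc]
  rw [this, h1, h2]
  simp only [mul_sub, sub_mul, smul_mul_assoc, mul_smul_comm, mul_one, mul_assoc]

lemma pm_cfc_kernel {p t : ℝ} (hp : p ∈ Ioo (0 : ℝ) 1) (ht : 0 < t) {x : 𝒜} (hx : 0 ≤ x) :
    cfc (Real.rpowIntegrand₀₁ p t) x =
      algebraMap ℝ 𝒜 (t ^ (p - 1)) - t ^ p • Ring.inverse (algebraMap ℝ 𝒜 t + x) := by
  rw [Real.rpowIntegrand₀₁_eq_sub (by grind) ht]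
  have hg : ContinuousOn (fun z : ℝ => (t + z)⁻¹) (spectrum ℝ x) := by
    fun_prop (disch := grind -abstractProof)
  have hf : ContinuousOn (fun z : ℝ => (1 + z)) (spectrum ℝ x) := by fun_prop
  have hspectrum :  ∀ r ∈ spectrum ℝ x, t + r ≠ 0 := by grind
  have := cfc_sub (fun _ : ℝ => t ^ (p - 1)) (fun z : ℝ => t ^ p * (t + z)⁻¹) x
    continuousOn_const (hg.const_mul _)
  have hid : cfc (fun z : ℝ => z) x = x := cfc_id' ℝ x (IsSelfAdjoint.of_nonneg hx)
  have h2 : cfc (fun z : ℝ => t + z) x = algebraMap ℝ 𝒜 t + x := by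
    rw [cfc_const_add t (fun z : ℝ => z) x continuousOn_id (IsSelfAdjoint.of_nonneg hx), hid]
  have h3 : cfc (fun z : ℝ => (t + z)⁻¹) x = Ring.inverse (algebraMap ℝ 𝒜 t + x) := by
    rw [cfc_inv (fun z : ℝ => t + z) x hspectrum (continuousOn_const.add continuousOn_id)
      (IsSelfAdjoint.of_nonneg hx), h2]
  rw [this, cfc_const _ x (IsSelfAdjoint.of_nonneg hx), cfc_const_mul _ _ x hg, h3]

lemma pm_rpow_integral {p : ℝ} (hp : p ∈ Ioo (0 : ℝ) 1) : ∃ μ : Measure ℝ, ∀ a : 𝒜,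
    IsStrictlyPositive a → IntegrableOn (fun t : ℝ => t ^ (p - 1) • pmH t 1 a) (Ioi 0) μ ∧
      a ^ p = ∫ t in Ioi 0, t ^ (p - 1) • pmH t 1 a ∂μ := by
  let q : NNReal := ⟨p, hp.1.le⟩
  have hq : q ∈ Ioo (0 : NNReal) 1 := ⟨hp.1, hp.2⟩
  obtain ⟨μ, hμ⟩ := CFC.exists_measure_nnrpow_eq_integral_cfcₙ_rpowIntegrand₀₁ 𝒜 hq
  refine ⟨μ, fun a ha => ?_⟩
  have key : EqOn (fun t => cfcₙ (Real.rpowIntegrand₀₁ p t) a)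
      (fun t : ℝ => t ^ (p - 1) • pmH t 1 a) (Ioi 0) := by
    intro t ht
    have ht : 0 < t := ht
    have hx : 0 ≤ a := ha.nonneg
    have h0 : ContinuousOn (Real.rpowIntegrand₀₁ p t) (quasispectrum ℝ a) := by
      rw [Real.rpowIntegrand₀₁_eq_sub (by grind) ht]
      fun_prop (disch := grind -abstractProof)
    dsimp only
    rw [cfcₙ_eq_cfc (f := Real.rpowIntegrand₀₁ p t) (a := a) (hf := h0)
      (hf0 := Real.rpowIntegrand₀₁_zero_right)]
    rw [pm_cfc_kernel hp ht hx, pmH, smul_sub, smul_smul, ← Real.rpow_add_one ht.ne']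
    simp [Algebra.algebraMap_eq_smul_one]
  obtain ⟨h1, h2⟩ := hμ a ha.nonneg
  refine ⟨(integrableOn_congr_fun key measurableSet_Ioi).1 h1, ?_⟩
  rw [← setIntegral_congr_fun measurableSet_Ioi key, ← show a ^ q = a ^ p from
    CFC.nnrpow_eq_rpow hq.1, h2]
  rfl

/-- The weighted geometric mean. -/
noncomputable def pmG (p : ℝ) (X A : 𝒜) : 𝒜 :=
  X ^ (1 / 2 : ℝ) * (X ^ (-(1 / 2) : ℝ) * A * X ^ (-(1 / 2) : ℝ)) ^ p * X ^ (1 / 2 : ℝ)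

lemma pm_half {X : 𝒜} (hX : IsStrictlyPositive X) : X ^ (1 / 2 : ℝ) * X ^ (1 / 2 : ℝ) = X := by
  rw [← CFC.rpow_add hX.isUnit]
  norm_num
  exact CFC.rpow_one X hX.nonneg

lemma pm_star (X : 𝒜) (r : ℝ) : star (X ^ r) = X ^ r :=
  (IsSelfAdjoint.of_nonneg CFC.rpow_nonneg).star_eq

lemma pm_unit {X : 𝒜} (hX : IsStrictlyPositive X) (r : ℝ) : IsUnit (X ^ r) :=
  (IsStrictlyPositive.rpow X r hX).isUnit

lemma pm_sp_conj {S A : 𝒜} (hS : IsUnit S) (hs : star S = S) (hA : IsStrictlyPositive A) :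
    IsStrictlyPositive (S * A * S) := by
  have := (hS.isStrictlyPositive_star_right_conjugate_iff (a := A)).2 hA
  rwa [hs] at this

lemma pm_conj_cancel {X : 𝒜} (hX : IsStrictlyPositive X) (A : 𝒜) :
    X ^ (1 / 2 : ℝ) * (X ^ (-(1 / 2) : ℝ) * A * X ^ (-(1 / 2) : ℝ)) * X ^ (1 / 2 : ℝ) = A := by
  have h1 := CFC.rpow_mul_rpow_neg (1 / 2) hX
  have h2 := CFC.rpow_neg_mul_rpow (1 / 2) hX
  calc _ = (X ^ (1 / 2 : ℝ) * X ^ (-(1 / 2) : ℝ)) * A * (X ^ (-(1 / 2) : ℝ) * X ^ (1 / 2 : ℝ)) := by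
        simp only [mul_assoc]
    _ = A := by rw [h1, h2]; simp

lemma pmG_integral {p : ℝ} (hp : p ∈ Ioo (0 : ℝ) 1) : ∃ μ : Measure ℝ, ∀ X A : 𝒜,
    IsStrictlyPositive X → IsStrictlyPositive A →
      IntegrableOn (fun t : ℝ => t ^ (p - 1) • pmH t X A) (Ioi 0) μ ∧
      pmG p X A = ∫ t in Ioi 0, t ^ (p - 1) • pmH t X A ∂μ := by
  obtain ⟨μ, hμ⟩ := pm_rpow_integral (𝒜 := 𝒜) hp
  refine ⟨μ, fun X A hX hA => ?_⟩
  set S := X ^ (1 / 2 : ℝ) with hSdef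
  set M := X ^ (-(1 / 2) : ℝ) * A * X ^ (-(1 / 2) : ℝ) with hM
  have hMp : IsStrictlyPositive M := pm_sp_conj (pm_unit hX _) (pm_star _ _) hA
  have hss : star S = S := pm_star _ _
  have hSX : S * 1 * star S = X := by rw [hss, mul_one]; exact pm_half hX
  have hSA : S * M * star S = A := by rw [hss]; exact pm_conj_cancel hX A
  have hSu : IsUnit S := pm_unit hX _
  obtain ⟨h1, h2⟩ := hμ M hMp
  let L : 𝒜 →L[ℝ] 𝒜 := ContinuousLinearMap.mulLeftRight ℝ 𝒜 S S
  have key : EqOn (fun t : ℝ => L (t ^ (p - 1) • pmH t 1 M))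
      (fun t : ℝ => t ^ (p - 1) • pmH t X A) (Ioi 0) := by
    intro t ht
    have hC : IsStrictlyPositive (t • (1 : 𝒜) + M) :=
      (pm_sp_smul ht isStrictlyPositive_one).add_nonneg hMp.nonneg
    have := pmH_congr t hSu 1 M hC.isUnit
    rw [hSX, hSA, hss] at this
    simp [L, this]
  refine ⟨(integrableOn_congr_fun key measurableSet_Ioi).1 (L.integrable_comp h1), ?_⟩
  rw [← setIntegral_congr_fun measurableSet_Ioi key, L.integral_comp_comm h1, ← h2]
  simp [L, pmG, hM, hSdef]

lemma pmG_congr {p : ℝ} (hp : p ∈ Ioo (0 : ℝ) 1) {S X A : 𝒜} (hS : IsUnit S) (hs : star S = S)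
    (hX : IsStrictlyPositive X) (hA : IsStrictlyPositive A) :
    pmG p (S * X * S) (S * A * S) = S * pmG p X A * S := by
  obtain ⟨μ, hμ⟩ := pmG_integral (𝒜 := 𝒜) hp
  rw [(hμ _ _ (pm_sp_conj hS hs hX) (pm_sp_conj hS hs hA)).2, (hμ _ _ hX hA).2]
  let L : 𝒜 →L[ℝ] 𝒜 := ContinuousLinearMap.mulLeftRight ℝ 𝒜 S S
  have := L.integral_comp_comm (hμ _ _ hX hA).1
  simp only [L, ContinuousLinearMap.mulLeftRight_apply] at this
  rw [← this]
  refine setIntegral_congr_fun measurableSet_Ioi ?_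
  intro t ht
  have hC : IsStrictlyPositive (t • X + A) := (pm_sp_smul ht hX).add_nonneg hA.nonneg
  have := pmH_congr t hS X A hC.isUnit
  rw [hs] at this
  simp [this]

lemma pmG_mono {p : ℝ} (hp : p ∈ Ioo (0 : ℝ) 1) {X X' A : 𝒜}
    (hX : IsStrictlyPositive X) (hA : IsStrictlyPositive A) (h : X ≤ X') :
    pmG p X A ≤ pmG p X' A := by
  obtain ⟨μ, hμ⟩ := pmG_integral (𝒜 := 𝒜) hp
  have h1 := hμ _ _ hX hA
  have h2 := hμ _ _ (hX.of_le h) hA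
  rw [h1.2, h2.2]
  refine setIntegral_mono_on h1.1 h2.1 measurableSet_Ioi fun t ht => ?_
  exact smul_le_smul_of_nonneg_left (pmH_mono ht hX hA h) (Real.rpow_nonneg (le_of_lt ht) _)

lemma pmG_concave {p : ℝ} (hp : p ∈ Ioo (0 : ℝ) 1) {X Y A B : 𝒜} (hX : IsStrictlyPositive X)
    (hA : IsStrictlyPositive A) (hY : IsStrictlyPositive Y)
    (hB : IsStrictlyPositive B) {a : ℝ} (ha : 0 ≤ a) (ha1 : a ≤ 1) :
    a • pmG p X A + (1 - a) • pmG p Y B ≤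
      pmG p (a • X + (1 - a) • Y) (a • A + (1 - a) • B) := by
  obtain ⟨μ, hμ⟩ := pmG_integral (𝒜 := 𝒜) hp
  have h1 := hμ _ _ hX hA
  have h2 := hμ _ _ hY hB
  have h3 := hμ _ _ (pm_sp_comb ha ha1 hX hY) (pm_sp_comb ha ha1 hA hB)
  have i1 : Integrable (fun t : ℝ => a • t ^ (p - 1) • pmH t X A) (μ.restrict (Ioi 0)) :=
    h1.1.smul a
  have i2 : Integrable (fun t : ℝ => (1 - a) • t ^ (p - 1) • pmH t Y B) (μ.restrict (Ioi 0)) :=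
    h2.1.smul (1 - a)
  rw [h1.2, h2.2, h3.2, ← integral_smul, ← integral_smul, ← integral_add i1 i2]
  refine setIntegral_mono_on (i1.add i2) h3.1 measurableSet_Ioi fun t ht => ?_
  have := smul_le_smul_of_nonneg_left (pmH_concave ht hX hA hY hB ha ha1)
    (Real.rpow_nonneg (le_of_lt ht) (p - 1))
  simpa only [smul_add, smul_comm a, smul_comm (1 - a)] using this

lemma pm_spec {M : 𝒜} (hM : IsStrictlyPositive M) : ∀ x ∈ spectrum ℝ M, 0 < x :=
  (CStarAlgebra.isStrictlyPositive_iff_isSelfAdjoint_and_spectrum_pos.1 hM).2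

lemma pm_cfc_rpow {M : 𝒜} (hM : IsStrictlyPositive M) {g : ℝ → ℝ}
    (hg : ContinuousOn g (spectrum ℝ M)) (hg0 : ∀ x ∈ spectrum ℝ M, 0 < g x) (r : ℝ) :
    cfc g M ^ r = cfc (fun x => g x ^ r) M ∧
      ContinuousOn (fun x => g x ^ r) (spectrum ℝ M) ∧
      ∀ x ∈ spectrum ℝ M, 0 < g x ^ r :=
  ⟨CFC.cfc_rpow hg0 hg hM.isSelfAdjoint,
    hg.rpow_const fun x hx => Or.inl (hg0 x hx).ne',
    fun x hx => Real.rpow_pos_of_pos (hg0 x hx) _⟩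

lemma pm_smul_rpow {M : 𝒜} (hM : IsStrictlyPositive M) {c : ℝ} (hc : 0 < c) (r : ℝ) :
    (c • M) ^ r = c ^ r • M ^ r := by
  have h0 := pm_spec hM
  have e : c • M = cfc (fun x : ℝ => c * x) M := by
    rw [cfc_const_mul c (fun x : ℝ => x) M continuousOn_id, cfc_id' ℝ M hM.isSelfAdjoint]
  have e2 := pm_cfc_rpow hM (g := fun x => x) continuousOn_id h0 r
  rw [cfc_id' ℝ M hM.isSelfAdjoint] at e2
  rw [e, (pm_cfc_rpow hM (g := fun x => c * x) (by fun_prop)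
    (fun x hx => mul_pos hc (h0 x hx)) r).1, e2.1, ← cfc_smul (c ^ r) _ M e2.2.1]
  refine cfc_congr fun x hx => ?_
  simp only [smul_eq_mul]
  exact Real.mul_rpow hc.le (h0 x hx).le

lemma pmG_smul {p : ℝ} {X A : 𝒜} (hX : IsStrictlyPositive X) (hA : IsStrictlyPositive A)
    {c : ℝ} (hc : 0 < c) : pmG p (c • X) A = c ^ (1 - p) • pmG p X A := by
  have hM : IsStrictlyPositive (X ^ (-(1 / 2) : ℝ) * A * X ^ (-(1 / 2) : ℝ)) :=
    pm_sp_conj (pm_unit hX _) (pm_star _ _) hA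
  rw [pmG, pmG, pm_smul_rpow hX hc, pm_smul_rpow hX hc]
  simp only [smul_mul_assoc, mul_smul_comm, smul_smul]
  rw [pm_smul_rpow hM (by positivity)]
  simp only [smul_mul_assoc, mul_smul_comm, smul_smul]
  congr 1
  rw [← Real.rpow_add hc, ← Real.rpow_add hc, ← Real.rpow_mul hc.le, ← Real.rpow_add hc]
  congr 1
  ring

lemma pmG_cfc (p : ℝ) {M : 𝒜} (hM : IsStrictlyPositive M) {g h : ℝ → ℝ}
    (hg : ContinuousOn g (spectrum ℝ M)) (hg0 : ∀ x ∈ spectrum ℝ M, 0 < g x)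
    (hh : ContinuousOn h (spectrum ℝ M)) (hh0 : ∀ x ∈ spectrum ℝ M, 0 < h x) :
    pmG p (cfc g M) (cfc h M) = cfc (fun x => g x ^ (1 - p) * h x ^ p) M := by
  obtain ⟨e1, c1, p1⟩ := pm_cfc_rpow hM hg hg0 (1 / 2)
  obtain ⟨e2, c2, p2⟩ := pm_cfc_rpow hM hg hg0 (-(1 / 2))
  have c3 : ContinuousOn (fun x => g x ^ (-(1 / 2) : ℝ) * h x * g x ^ (-(1 / 2) : ℝ))
      (spectrum ℝ M) := (c2.mul hh).mul c2
  have p3 : ∀ x ∈ spectrum ℝ M, 0 < g x ^ (-(1 / 2) : ℝ) * h x * g x ^ (-(1 / 2) : ℝ) :=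
    fun x hx => mul_pos (mul_pos (p2 x hx) (hh0 x hx)) (p2 x hx)
  obtain ⟨e4, c4, p4⟩ := pm_cfc_rpow hM c3 p3 p
  have m1 : cfc (fun x => g x ^ (-(1 / 2) : ℝ)) M * cfc h M *
      cfc (fun x => g x ^ (-(1 / 2) : ℝ)) M =
      cfc (fun x => g x ^ (-(1 / 2) : ℝ) * h x * g x ^ (-(1 / 2) : ℝ)) M := by
    rw [← cfc_mul _ _ M c2 hh]
    exact (cfc_mul _ _ M (c2.mul hh) c2).symm
  rw [pmG, e1, e2, m1, e4, ← cfc_mul _ _ M c1 c4]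
  refine (cfc_mul _ _ M (c1.mul c4) c1).symm.trans ?_
  refine cfc_congr fun x hx => ?_
  have h1 := hg0 x hx
  have h2 := hh0 x hx
  have h3 := p2 x hx
  change g x ^ (1 / 2 : ℝ) * (g x ^ (-(1 / 2) : ℝ) * h x * g x ^ (-(1 / 2) : ℝ)) ^ p *
    g x ^ (1 / 2 : ℝ) = g x ^ (1 - p) * h x ^ p
  rw [Real.mul_rpow (by positivity) (by positivity), Real.mul_rpow (by positivity) (by positivity),
    ← Real.rpow_mul h1.le]
  have : g x ^ (1 - p) = g x ^ (1 / 2 : ℝ) * g x ^ (-(1 / 2) * p) * g x ^ (-(1 / 2) * p)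
      * g x ^ (1 / 2 : ℝ) := by
    rw [← Real.rpow_add h1, ← Real.rpow_add h1, ← Real.rpow_add h1]
    congr 1
    ring
  rw [this]
  ring

/-- The power mean. -/
noncomputable def pmP (lam p : ℝ) (A B : 𝒜) : 𝒜 :=
  B ^ (1 / 2 : ℝ) *
    (lam • (B ^ (-(1 / 2) : ℝ) * A * B ^ (-(1 / 2) : ℝ)) ^ p + (1 - lam) • (1 : 𝒜)) ^ (1 / p : ℝ) *
    B ^ (1 / 2 : ℝ)

lemma pm_inner_sp {lam : ℝ} (p : ℝ) (hl0 : 0 ≤ lam) (hl1 : lam ≤ 1) {A B : 𝒜}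
    (hA : IsStrictlyPositive A) (hB : IsStrictlyPositive B) :
    IsStrictlyPositive
      (lam • (B ^ (-(1 / 2) : ℝ) * A * B ^ (-(1 / 2) : ℝ)) ^ p + (1 - lam) • (1 : 𝒜)) :=
  pm_sp_comb hl0 hl1 (IsStrictlyPositive.rpow _ _ (pm_sp_conj (pm_unit hB _) (pm_star _ _) hA))
    isStrictlyPositive_one

lemma pmP_sp {lam : ℝ} (p : ℝ) (hl0 : 0 ≤ lam) (hl1 : lam ≤ 1) {A B : 𝒜}
    (hA : IsStrictlyPositive A) (hB : IsStrictlyPositive B) :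
    IsStrictlyPositive (pmP lam p A B) :=
  pm_sp_conj (pm_unit hB _) (pm_star _ _)
    (IsStrictlyPositive.rpow _ _ (pm_inner_sp p hl0 hl1 hA hB))

lemma pm_fixed_one {lam p : ℝ} (hp : p ∈ Ioo (0 : ℝ) 1) (hl0 : 0 ≤ lam) (hl1 : lam ≤ 1) {M : 𝒜}
    (hM : IsStrictlyPositive M) :
    lam • pmG p ((lam • M ^ p + (1 - lam) • (1 : 𝒜)) ^ (1 / p : ℝ)) M +
      (1 - lam) • pmG p ((lam • M ^ p + (1 - lam) • (1 : 𝒜)) ^ (1 / p : ℝ)) 1 =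
    (lam • M ^ p + (1 - lam) • (1 : 𝒜)) ^ (1 / p : ℝ) := by
  have h0 := pm_spec hM
  have hs := hM.isSelfAdjoint
  obtain ⟨e1, c1, p1⟩ := pm_cfc_rpow hM (g := fun x => x) continuousOn_id h0 p
  have eM : cfc (fun x : ℝ => x) M = M := cfc_id' ℝ M hs
  have eO : cfc (fun _ : ℝ => (1 : ℝ)) M = 1 := cfc_const_one ℝ M hs
  rw [eM] at e1
  have c2 : ContinuousOn (fun x : ℝ => lam * x ^ p + (1 - lam)) (spectrum ℝ M) :=
    (c1.const_mul _).add continuousOn_const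
  have p2 : ∀ x ∈ spectrum ℝ M, 0 < lam * x ^ p + (1 - lam) := by
    intro x hx
    have := p1 x hx
    rcases hl0.eq_or_lt with rfl | h
    · simp
    · have := mul_pos h this
      linarith
  have e2 : lam • M ^ p + (1 - lam) • (1 : 𝒜) =
      cfc (fun x : ℝ => lam * x ^ p + (1 - lam)) M := by
    rw [cfc_add M (fun x : ℝ => lam * x ^ p) (fun _ => 1 - lam) (c1.const_mul _)
      continuousOn_const, cfc_const_mul _ _ M c1, e1, cfc_const _ M hs, Algebra.algebraMap_eq_smul_one]
  obtain ⟨e3, c3, p3⟩ := pm_cfc_rpow hM c2 p2 (1 / p)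
  rw [e2, e3]
  have g1 := pmG_cfc p hM c3 p3 (h := fun x => x) continuousOn_id h0
  have g2 := pmG_cfc p hM c3 p3 (continuousOn_const (c := (1 : ℝ))) (fun _ _ => one_pos)
  rw [eO] at g2
  rw [eM] at g1
  rw [g1, g2]
  have c4 := (c3.rpow_const (p := 1 - p) fun x hx => Or.inl (p3 x hx).ne')
  have c5 : ContinuousOn (fun x : ℝ => ((lam * x ^ p + (1 - lam)) ^ (1 / p)) ^ (1 - p) *
    x ^ p) (spectrum ℝ M) := c4.mul c1
  have c6 : ContinuousOn (fun x : ℝ => ((lam * x ^ p + (1 - lam)) ^ (1 / p)) ^ (1 - p) *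
    (1 : ℝ) ^ p) (spectrum ℝ M) := c4.mul continuousOn_const
  rw [← cfc_const_mul _ _ M c5, ← cfc_const_mul _ _ M c6,
    ← cfc_add M _ _ (c5.const_mul _) (c6.const_mul _)]
  refine cfc_congr fun x hx => ?_
  have q2 := p2 x hx
  have e : (lam * x ^ p + (1 - lam)) ^ (1 / p) =
      ((lam * x ^ p + (1 - lam)) ^ (1 / p)) ^ (1 - p) * (lam * x ^ p + (1 - lam)) := by
    have : 1 / p * (1 - p) + 1 = 1 / p := by
      have := hp.1.ne'
      field_simp
      ring
    rw [← Real.rpow_mul q2.le, ← Real.rpow_add_one q2.ne', this]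
  change lam * (((lam * x ^ p + (1 - lam)) ^ (1 / p)) ^ (1 - p) * x ^ p) +
    (1 - lam) * (((lam * x ^ p + (1 - lam)) ^ (1 / p)) ^ (1 - p) * 1 ^ p) =
    (lam * x ^ p + (1 - lam)) ^ (1 / p)
  refine Eq.trans ?_ e.symm
  rw [Real.one_rpow]
  ring

lemma pmP_fixed {lam p : ℝ} (hp : p ∈ Ioo (0 : ℝ) 1) (hl0 : 0 ≤ lam) (hl1 : lam ≤ 1) {A B : 𝒜}
    (hA : IsStrictlyPositive A) (hB : IsStrictlyPositive B) :
    lam • pmG p (pmP lam p A B) A + (1 - lam) • pmG p (pmP lam p A B) B = pmP lam p A B := by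
  have hM : IsStrictlyPositive (B ^ (-(1 / 2) : ℝ) * A * B ^ (-(1 / 2) : ℝ)) :=
    pm_sp_conj (pm_unit hB _) (pm_star _ _) hA
  have hF := IsStrictlyPositive.rpow _ (1 / p) (pm_inner_sp p hl0 hl1 hA hB)
  have hu := pm_unit hB (1 / 2)
  have hst := pm_star B (1 / 2)
  have h1 := pmG_congr hp hu hst hF hM
  have h2 := pmG_congr hp hu hst hF isStrictlyPositive_one
  rw [pm_conj_cancel hB] at h1
  rw [mul_one, pm_half hB] at h2
  rw [pmP, h1, h2]
  conv_rhs => rw [← pm_fixed_one hp hl0 hl1 hM]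
  simp only [mul_add, add_mul, smul_mul_assoc, mul_smul_comm]

lemma pm_le_smul {X Y : 𝒜} (hX : 0 ≤ X) (hY : IsStrictlyPositive Y) :
    ∃ c : ℝ, 0 < c ∧ X ≤ c • Y := by
  rcases subsingleton_or_nontrivial 𝒜 with hsub | hnon
  · exact ⟨1, one_pos, le_of_eq (Subsingleton.elim _ _)⟩
  obtain ⟨r, hr, h⟩ : ∃ r : ℝ, 0 < r ∧ algebraMap ℝ 𝒜 r ≤ Y :=
    (CFC.exists_pos_algebraMap_le_iff hY.isSelfAdjoint).2 (pm_spec hY)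
  have h1 : X ≤ algebraMap ℝ 𝒜 ‖X‖ := IsSelfAdjoint.le_algebraMap_norm_self (IsSelfAdjoint.of_nonneg hX)
  refine ⟨(‖X‖ + 1) / r, by positivity, ?_⟩
  calc X ≤ algebraMap ℝ 𝒜 ‖X‖ := h1
    _ ≤ algebraMap ℝ 𝒜 (‖X‖ + 1) := by
        rw [map_add]; exact le_add_of_nonneg_right (by simp)
    _ = ((‖X‖ + 1) / r) • algebraMap ℝ 𝒜 r := by
        rw [Algebra.algebraMap_eq_smul_one, Algebra.algebraMap_eq_smul_one, smul_smul]
        congr 1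
        field_simp
    _ ≤ _ := smul_le_smul_of_nonneg_left h (by positivity)

lemma pm_le_of_sub {lam p : ℝ} (hp : p ∈ Ioo (0 : ℝ) 1) (hl0 : 0 ≤ lam) (hl1 : lam ≤ 1)
    {A B X : 𝒜} (hA : IsStrictlyPositive A) (hB : IsStrictlyPositive B)
    (hX : IsStrictlyPositive X) (h : X ≤ lam • pmG p X A + (1 - lam) • pmG p X B) :
    X ≤ pmP lam p A B := by
  have hY := pmP_sp p hl0 hl1 hA hB
  set Y := pmP lam p A B with hYdef
  obtain ⟨c, hc, hcY⟩ := pm_le_smul hX.nonneg hY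
  have step : ∀ c : ℝ, 0 < c → X ≤ c • Y → X ≤ c ^ (1 - p) • Y := by
    intro c hc hcY
    have hm1 := pmG_mono hp hX hA hcY
    have hm2 := pmG_mono hp hX hB hcY
    rw [pmG_smul hY hA hc] at hm1
    rw [pmG_smul hY hB hc] at hm2
    refine h.trans ((add_le_add (smul_le_smul_of_nonneg_left hm1 hl0)
      (smul_le_smul_of_nonneg_left hm2 (sub_nonneg.2 hl1))).trans (le_of_eq ?_))
    rw [smul_comm lam, smul_comm (1 - lam), ← smul_add, hYdef, pmP_fixed hp hl0 hl1 hA hB]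
  have all : ∀ k : ℕ, X ≤ c ^ ((1 - p) ^ k) • Y := by
    intro k
    induction k with
    | zero => simpa using hcY
    | succ k ih =>
      have := step _ (Real.rpow_pos_of_pos hc _) ih
      rwa [← Real.rpow_mul hc.le, ← pow_succ] at this
  have t1 : Tendsto (fun k : ℕ => (1 - p) ^ k) atTop (𝓝 0) :=
    tendsto_pow_atTop_nhds_zero_of_lt_one (by linarith [hp.2]) (by linarith [hp.1])
  have t2 : Tendsto (fun k : ℕ => c ^ ((1 - p) ^ k) • Y) atTop (𝓝 (c ^ (0 : ℝ) • Y)) :=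
    ((Real.continuousAt_const_rpow hc.ne').tendsto.comp t1).smul_const Y
  rw [Real.rpow_zero, one_smul] at t2
  exact ge_of_tendsto' t2 all

lemma pmP_concave {lam p : ℝ} (hp : p ∈ Ioo (0 : ℝ) 1) (hl0 : 0 ≤ lam) (hl1 : lam ≤ 1)
    {A₁ A₂ B₁ B₂ : 𝒜} (hA₁ : IsStrictlyPositive A₁) (hA₂ : IsStrictlyPositive A₂)
    (hB₁ : IsStrictlyPositive B₁) (hB₂ : IsStrictlyPositive B₂)
    {a : ℝ} (ha : 0 ≤ a) (ha1 : a ≤ 1) :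
    a • pmP lam p A₁ B₁ + (1 - a) • pmP lam p A₂ B₂ ≤
      pmP lam p (a • A₁ + (1 - a) • A₂) (a • B₁ + (1 - a) • B₂) := by
  have hY₁ := pmP_sp p hl0 hl1 hA₁ hB₁
  have hY₂ := pmP_sp p hl0 hl1 hA₂ hB₂
  refine pm_le_of_sub hp hl0 hl1 (pm_sp_comb ha ha1 hA₁ hA₂) (pm_sp_comb ha ha1 hB₁ hB₂)
    (pm_sp_comb ha ha1 hY₁ hY₂) ?_
  have e1 := pmP_fixed hp hl0 hl1 hA₁ hB₁
  have e2 := pmP_fixed hp hl0 hl1 hA₂ hB₂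
  have k1 := smul_le_smul_of_nonneg_left (pmG_concave hp hY₁ hA₁ hY₂ hA₂ ha ha1) hl0
  have k2 := smul_le_smul_of_nonneg_left (pmG_concave hp hY₁ hB₁ hY₂ hB₂ ha ha1)
    (sub_nonneg.2 hl1)
  refine le_trans (le_of_eq ?_) (add_le_add k1 k2)
  conv_lhs => rw [← e1, ← e2]
  simp only [smul_add, smul_comm a, smul_comm (1 - a)]
  abel

lemma pmP_rpow_concave {lam p : ℝ} (hp : p ∈ Ioo (0 : ℝ) 1) (hl0 : 0 ≤ lam) (hl1 : lam ≤ 1)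
    {A₁ A₂ B₁ B₂ : 𝒜} (hA₁ : IsStrictlyPositive A₁) (hA₂ : IsStrictlyPositive A₂)
    (hB₁ : IsStrictlyPositive B₁) (hB₂ : IsStrictlyPositive B₂)
    {a : ℝ} (ha : 0 ≤ a) (ha1 : a ≤ 1) :
    a • (pmP lam p A₁ B₁) ^ (1 - p) + (1 - a) • (pmP lam p A₂ B₂) ^ (1 - p) ≤
      (pmP lam p (a • A₁ + (1 - a) • A₂) (a • B₁ + (1 - a) • B₂)) ^ (1 - p) := by
  have hq : 1 - p ∈ Icc (0 : ℝ) 1 := ⟨by linarith [hp.2], by linarith [hp.1]⟩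
  refine le_trans ?_ (CFC.rpow_le_rpow hq (pmP_concave hp hl0 hl1 hA₁ hA₂ hB₁ hB₂ ha ha1))
  exact (CFC.concaveOn_rpow hq).2 (pmP_sp p hl0 hl1 hA₁ hB₁).nonneg
    (pmP_sp p hl0 hl1 hA₂ hB₂).nonneg ha (sub_nonneg.2 ha1) (by ring)

end PowerMean

section Transfer
open scoped MatrixOrder Matrix.Norms.L2Operator

lemma mpow_eq_rpow {n : ℕ} {A : Matrix (Fin n) (Fin n) ℂ} (hA : IsStrictlyPositive A) (q : ℝ) :
    mpow A q = A ^ q := by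
  have hH : A.IsHermitian := hA.isSelfAdjoint
  rw [CFC.rpow_eq_cfc_real hA.nonneg, hH.cfc_eq, Matrix.IsHermitian.cfc, mpow, dif_pos hH]
  rfl

lemma persp2_eq {n : ℕ} {lam : ℝ} (p : ℝ) (hl0 : 0 ≤ lam) (hl1 : lam ≤ 1)
    {A B : Matrix (Fin n) (Fin n) ℂ} (hA : IsStrictlyPositive A) (hB : IsStrictlyPositive B) :
    persp2 lam p A B = pmP lam p A B := by
  have hM : IsStrictlyPositive (B ^ (-(1 / 2) : ℝ) * A * B ^ (-(1 / 2) : ℝ)) :=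
    pm_sp_conj (pm_unit hB _) (pm_star _ _) hA
  rw [persp2, pmP, mpow_eq_rpow hB, mpow_eq_rpow hB, mpow_eq_rpow hM,
    mpow_eq_rpow (pm_inner_sp p hl0 hl1 hA hB)]

lemma stmt16_aux {n : ℕ} (p lam : ℝ) (hp0 : 0 < p) (hp1 : p ≤ 1)
    (hl0 : 0 ≤ lam) (hl1 : lam ≤ 1)
    (A₁ A₂ B₁ B₂ : Matrix (Fin n) (Fin n) ℂ)
    (hA₁ : A₁.PosDef) (hA₂ : A₂.PosDef) (hB₁ : B₁.PosDef) (hB₂ : B₂.PosDef)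
    (α : ℝ) (hα0 : 0 ≤ α) (hα1 : α ≤ 1) :
    (mpow (persp2 lam p (α • A₁ + (1 - α) • A₂) (α • B₁ + (1 - α) • B₂)) (1 - p) -
      (α • mpow (persp2 lam p A₁ B₁) (1 - p) +
        (1 - α) • mpow (persp2 lam p A₂ B₂) (1 - p))).PosSemidef := by
  have a1 := hA₁.isStrictlyPositive
  have a2 := hA₂.isStrictlyPositive
  have b1 := hB₁.isStrictlyPositive
  have b2 := hB₂.isStrictlyPositive
  have a3 := pm_sp_comb hα0 hα1 a1 a2
  have b3 := pm_sp_comb hα0 hα1 b1 b2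
  have s1 := pmP_sp p hl0 hl1 a1 b1
  have s2 := pmP_sp p hl0 hl1 a2 b2
  have s3 := pmP_sp p hl0 hl1 a3 b3
  rw [persp2_eq p hl0 hl1 a1 b1, persp2_eq p hl0 hl1 a2 b2, persp2_eq p hl0 hl1 a3 b3,
    mpow_eq_rpow s1, mpow_eq_rpow s2, mpow_eq_rpow s3, ← Matrix.le_iff]
  rcases hp1.eq_or_lt with rfl | hlt
  · rw [sub_self, CFC.rpow_zero _ s1.nonneg, CFC.rpow_zero _ s2.nonneg, CFC.rpow_zero _ s3.nonneg,
      ← add_smul]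
    simp
  · exact pmP_rpow_concave ⟨hp0, hlt⟩ hl0 hl1 a1 a2 b1 b2 hα0 hα1

end Transfer

theorem stmt16 {n : ℕ} (p lam : ℝ) (hp0 : 0 < p) (hp1 : p ≤ 1)
    (hl0 : 0 ≤ lam) (hl1 : lam ≤ 1)
    (A₁ A₂ B₁ B₂ : Matrix (Fin n) (Fin n) ℂ)
    (hA₁ : A₁.PosDef) (hA₂ : A₂.PosDef) (hB₁ : B₁.PosDef) (hB₂ : B₂.PosDef)
    (α : ℝ) (hα0 : 0 ≤ α) (hα1 : α ≤ 1) :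
    (mpow (persp2 lam p (α • A₁ + (1 - α) • A₂) (α • B₁ + (1 - α) • B₂)) (1 - p) -
      (α • mpow (persp2 lam p A₁ B₁) (1 - p) +
        (1 - α) • mpow (persp2 lam p A₂ B₂) (1 - p))).PosSemidef :=
  stmt16_aux p lam hp0 hp1 hl0 hl1 A₁ A₂ B₁ B₂ hA₁ hA₂ hB₁ hB₂ α hα0 hα1
end

section
/- Let 0 < p ≤ 1. Define F₂(A, B) = (1/p) ∫₀¹ [B^{1/2}(λ(B^{-1/2}AB^{-1/2})^p + (1-λ)I)^{1/p}B^{1/2}]^{1-p} dλ on pairs of n×n positive definite complex matrices. Then F₂ is jointly concave (in the Loewner order), and for positive real scalars s ≠ t (i.e., 1×1 matrices) F₂(s, t) = (s − t)/(s^p − t^p), while F₂(t, t) = (1/p)t^{1-p}. -/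
open Matrix MeasureTheory
open scoped ComplexOrder

attribute [local instance] Matrix.normedAddCommGroup Matrix.normedSpace

/-- `F₂(A,B) = (1/p) ∫₀¹ [B^{1/2}(λ(B^{-1/2}AB^{-1/2})^p + (1-λ)I)^{1/p}B^{1/2}]^{1-p} dλ`. -/
noncomputable def F2map {n : ℕ} (p : ℝ) (A B : Matrix (Fin n) (Fin n) ℂ) :
    Matrix (Fin n) (Fin n) ℂ :=
  (1 / p) • ∫ l in Set.Icc (0 : ℝ) 1, mpow (persp2 l p A B) (1 - p)


section aux
variable {n : ℕ}

theorem aux_contSpec (f : ℝ → ℝ) (A : Matrix (Fin n) (Fin n) ℂ) :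
    ContinuousOn f (spectrum ℝ A) := by
  have : (spectrum ℝ A).Finite := Matrix.finite_real_spectrum
  exact this.continuousOn f

theorem mpow_eq_cfc (A : Matrix (Fin n) (Fin n) ℂ) (q : ℝ) :
    mpow A q = cfc (fun x : ℝ => x ^ q) A := by
  unfold mpow
  split_ifs with h
  · rw [h.cfc_eq]
    rfl
  · rw [cfc_apply_of_not_predicate]
    exact h

theorem aux_spec_pos {A : Matrix (Fin n) (Fin n) ℂ} (hA : A.PosDef) :
    ∀ x ∈ spectrum ℝ A, 0 < x := by
  intro x hx
  rw [hA.1.spectrum_real_eq_range_eigenvalues] at hx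
  obtain ⟨i, rfl⟩ := hx
  exact hA.eigenvalues_pos i

theorem aux_spec_nonneg {A : Matrix (Fin n) (Fin n) ℂ} (hA : A.PosSemidef) :
    ∀ x ∈ spectrum ℝ A, 0 ≤ x := by
  intro x hx
  rw [hA.1.spectrum_real_eq_range_eigenvalues] at hx
  obtain ⟨i, rfl⟩ := hx
  exact hA.eigenvalues_nonneg i

theorem aux_cfc_herm (f : ℝ → ℝ) (A : Matrix (Fin n) (Fin n) ℂ) : (cfc f A).IsHermitian :=
  cfc_predicate f A

theorem aux_cfc_psd {f : ℝ → ℝ} {A : Matrix (Fin n) (Fin n) ℂ} (hA : A.IsHermitian)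
    (h : ∀ x ∈ spectrum ℝ A, 0 ≤ f x) : (cfc f A).PosSemidef := by
  rw [(aux_cfc_herm f A).posSemidef_iff_eigenvalues_nonneg]
  intro i
  have h1 := (aux_cfc_herm f A).eigenvalues_mem_spectrum_real i
  obtain ⟨y, hy, hy2⟩ := (cfc_map_spectrum f A hA (aux_contSpec f A)).subset h1
  simp only [Pi.zero_apply]
  rw [← hy2]
  exact h y hy

theorem aux_cfc_pd {f : ℝ → ℝ} {A : Matrix (Fin n) (Fin n) ℂ} (hA : A.IsHermitian)
    (h : ∀ x ∈ spectrum ℝ A, 0 < f x) : (cfc f A).PosDef := by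
  rw [(aux_cfc_herm f A).posDef_iff_eigenvalues_pos]
  intro i
  have h1 := (aux_cfc_herm f A).eigenvalues_mem_spectrum_real i
  obtain ⟨y, hy, hy2⟩ := (cfc_map_spectrum f A hA (aux_contSpec f A)).subset h1
  rw [← hy2]
  exact h y hy

theorem aux_cfc_mul (f g : ℝ → ℝ) (A : Matrix (Fin n) (Fin n) ℂ) :
    cfc f A * cfc g A = cfc (fun x => f x * g x) A :=
  (cfc_mul f g A (aux_contSpec f A) (aux_contSpec g A)).symm

/-- real quadratic form -/
noncomputable def aux_quad (x : Fin n → ℂ) (A : Matrix (Fin n) (Fin n) ℂ) : ℝ :=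
  (star x ⬝ᵥ A *ᵥ x).re

theorem aux_quad_sub (x : Fin n → ℂ) (A B : Matrix (Fin n) (Fin n) ℂ) :
    aux_quad x (A - B) = aux_quad x A - aux_quad x B := by
  simp [aux_quad, Matrix.sub_mulVec, dotProduct_sub]

theorem aux_quad_add (x : Fin n → ℂ) (A B : Matrix (Fin n) (Fin n) ℂ) :
    aux_quad x (A + B) = aux_quad x A + aux_quad x B := by
  simp [aux_quad, Matrix.add_mulVec, dotProduct_add]

theorem aux_quad_smul (x : Fin n → ℂ) (c : ℝ) (A : Matrix (Fin n) (Fin n) ℂ) :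
    aux_quad x (c • A) = c * aux_quad x A := by
  simp [aux_quad, Matrix.smul_mulVec, dotProduct_smul]

theorem aux_quad_conj (x : Fin n → ℂ) (T A : Matrix (Fin n) (Fin n) ℂ) :
    aux_quad x (Tᴴ * A * T) = aux_quad (T *ᵥ x) A := by
  simp only [aux_quad, Matrix.star_mulVec, ← Matrix.mulVec_mulVec, Matrix.dotProduct_mulVec,
    Matrix.vecMul_vecMul]

theorem aux_psd_iff {A : Matrix (Fin n) (Fin n) ℂ} (hA : A.IsHermitian) :
    A.PosSemidef ↔ ∀ x, 0 ≤ aux_quad x A := by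
  constructor
  · intro h x
    exact h.re_dotProduct_nonneg x
  · intro h
    refine PosSemidef.of_dotProduct_mulVec_nonneg hA fun x => ?_
    rw [Complex.nonneg_iff]
    refine ⟨h x, ?_⟩
    exact (hA.im_star_dotProduct_mulVec_self x).symm

theorem aux_quad_cfc {A : Matrix (Fin n) (Fin n) ℂ} (hA : A.IsHermitian) (x : Fin n → ℂ) :
    ∃ w : Fin n → ℝ, ∀ f : ℝ → ℝ, aux_quad x (cfc f A) = ∑ i, f (hA.eigenvalues i) * w i := by
  refine ⟨fun i => Complex.normSq (((hA.eigenvectorUnitary : Matrix (Fin n) (Fin n) ℂ)ᴴ *ᵥ x) i),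
    fun f => ?_⟩
  have h : cfc f A = ((hA.eigenvectorUnitary : Matrix (Fin n) (Fin n) ℂ)ᴴ)ᴴ *
      Matrix.diagonal (fun i => ((f (hA.eigenvalues i) : ℝ) : ℂ)) *
      (hA.eigenvectorUnitary : Matrix (Fin n) (Fin n) ℂ)ᴴ := by
    rw [hA.cfc_eq, Matrix.conjTranspose_conjTranspose]; rfl
  rw [h, aux_quad_conj]
  generalize (hA.eigenvectorUnitary : Matrix (Fin n) (Fin n) ℂ)ᴴ *ᵥ x = y
  simp only [aux_quad, Matrix.mulVec_diagonal, dotProduct, Complex.re_sum]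
  refine Finset.sum_congr rfl fun i _ => ?_
  simp [Complex.normSq_apply]
  ring

theorem aux_cont {X : Type*} [TopologicalSpace X] {s : Set X} {a : X → Matrix (Fin n) (Fin n) ℂ}
    (ha : ContinuousOn a s) (h : ∀ x ∈ s, (a x).PosDef) (q : ℝ) :
    ContinuousOn (fun x => cfc (fun y : ℝ => y ^ q) (a x)) s := by
  let _ : CStarAlgebra (Matrix (Fin n) (Fin n) ℂ) := Matrix.instCStarAlgebra
  refine ContinuousOn.cfc_of_mem_nhdsSet (A := Matrix (Fin n) (Fin n) ℂ) (s := Set.Ioi 0)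
    (fun y : ℝ => y ^ q) ?_ ha (fun x hx => (h x hx).1) ?_
  · rw [isOpen_Ioi.mem_nhdsSet]
    simp only [Set.iUnion_subset_iff]
    exact fun x hx => aux_spec_pos (h x hx)
  · intro y hy
    exact (Real.continuousAt_rpow_const y q (Or.inl (ne_of_gt hy))).continuousWithinAt


theorem aux_cfc_smul (c : ℝ) (f : ℝ → ℝ) (A : Matrix (Fin n) (Fin n) ℂ) :
    cfc (fun x => c * f x) A = c • cfc f A :=
  cfc_const_mul c f A (aux_contSpec f A)

theorem aux_resolvent {K : Matrix (Fin n) (Fin n) ℂ} (hK : K.PosSemidef) {t : ℝ} (ht : 0 < t) :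
    cfc (fun x : ℝ => (t + x)⁻¹) K * (t • 1 + K) = 1 ∧
    (t • 1 + K) * cfc (fun x : ℝ => (t + x)⁻¹) K = 1 := by
  have hs : IsSelfAdjoint K := hK.1
  have h1 : (t • 1 + K) = cfc (fun x : ℝ => t + x) K := by
    rw [cfc_const_add t (fun x => x) K (aux_contSpec _ K) hs, cfc_id' ℝ K hs,
      Algebra.algebraMap_eq_smul_one]
  have h2 : cfc (fun x : ℝ => (t + x)⁻¹ * (t + x)) K = 1 := by
    rw [← cfc_const_one ℝ K hs]
    refine cfc_congr fun x hx => ?_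
    have := aux_spec_nonneg hK x hx
    have h3 : t + x ≠ 0 := by positivity
    simp [h3]
  constructor
  · rw [h1, aux_cfc_mul, h2]
  · rw [h1, aux_cfc_mul, ← h2]
    congr 1
    ext x
    ring

theorem aux_integrand_eq {K : Matrix (Fin n) (Fin n) ℂ} (hK : K.PosSemidef) {t : ℝ} (p : ℝ) :
    cfc (fun x : ℝ => Real.rpowIntegrand₀₁ p t x) K =
      t ^ p • (t⁻¹ • 1 - cfc (fun x : ℝ => (t + x)⁻¹) K) := by
  have hs : IsSelfAdjoint K := hK.1
  unfold Real.rpowIntegrand₀₁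
  rw [aux_cfc_smul, cfc_sub (fun _ => t⁻¹) _ K (aux_contSpec _ K) (aux_contSpec _ K),
    cfc_const _ K hs, Algebra.algebraMap_eq_smul_one]

theorem aux_square {T K R W : Matrix (Fin n) (Fin n) ℂ} (hRD : R * K = 1) (hDR : K * R = 1) 
    (hR : Rᴴ = R) (hW : Wᴴ = W) :
    (R * T - T * W)ᴴ * K * (R * T - T * W) =
      Tᴴ * R * T - Tᴴ * T * W - W * Tᴴ * T + W * Tᴴ * K * T * W := by
  have e1 : ∀ X, R * (K * X) = X := fun X => by rw [← mul_assoc, hRD, one_mul]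
  have e2 : ∀ X, K * (R * X) = X := fun X => by rw [← mul_assoc, hDR, one_mul]
  simp only [conjTranspose_sub, conjTranspose_mul, hR, hW, sub_mul, mul_sub, mul_assoc, e1, e2]
  abel

theorem aux_integrand {K₁ K₂ T₁ T₂ : Matrix (Fin n) (Fin n) ℂ} (h₁ : K₁.PosSemidef)
    (h₂ : K₂.PosSemidef) (hT : (1 - (T₁ᴴ * T₁ + T₂ᴴ * T₂)).PosSemidef) {t : ℝ} (ht : 0 < t)
    (p : ℝ) :
    (cfc (fun x : ℝ => Real.rpowIntegrand₀₁ p t x) (T₁ᴴ * K₁ * T₁ + T₂ᴴ * K₂ * T₂) -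
      (T₁ᴴ * cfc (fun x : ℝ => Real.rpowIntegrand₀₁ p t x) K₁ * T₁ +
        T₂ᴴ * cfc (fun x : ℝ => Real.rpowIntegrand₀₁ p t x) K₂ * T₂)).PosSemidef := by
  have hS : (T₁ᴴ * K₁ * T₁ + T₂ᴴ * K₂ * T₂).PosSemidef :=
    (h₁.conjTranspose_mul_mul_same T₁).add (h₂.conjTranspose_mul_mul_same T₂)
  rw [aux_integrand_eq hS, aux_integrand_eq h₁, aux_integrand_eq h₂]
  obtain ⟨a1, a2⟩ := aux_resolvent h₁ ht
  obtain ⟨b1, b2⟩ := aux_resolvent h₂ ht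
  obtain ⟨c1, c2⟩ := aux_resolvent hS ht
  have hR₁ := aux_cfc_herm (fun x : ℝ => (t + x)⁻¹) K₁
  have hR₂ := aux_cfc_herm (fun x : ℝ => (t + x)⁻¹) K₂
  have hW := aux_cfc_herm (fun x : ℝ => (t + x)⁻¹) (T₁ᴴ * K₁ * T₁ + T₂ᴴ * K₂ * T₂)
  generalize cfc (fun x : ℝ => (t + x)⁻¹) K₁ = R₁ at *
  generalize cfc (fun x : ℝ => (t + x)⁻¹) K₂ = R₂ at *
  generalize cfc (fun x : ℝ => (t + x)⁻¹) (T₁ᴴ * K₁ * T₁ + T₂ᴴ * K₂ * T₂) = W at *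
  have hD₁ : (t • 1 + K₁).PosSemidef := (PosSemidef.one.smul ht.le).add h₁
  have hD₂ : (t • 1 + K₂).PosSemidef := (PosSemidef.one.smul ht.le).add h₂
  have s1 := aux_square (T := T₁) a1 a2 hR₁ hW
  have s2 := aux_square (T := T₂) b1 b2 hR₂ hW
  have P := ((hD₁.conjTranspose_mul_mul_same (R₁ * T₁ - T₁ * W)).add
    (hD₂.conjTranspose_mul_mul_same (R₂ * T₂ - T₂ * W))).smul ht.le
  have Q := hT.conjTranspose_mul_mul_same (1 - t • W)
  have F := ((P.add Q).smul (inv_nonneg.2 ht.le)).smul (Real.rpow_nonneg ht.le p)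
  convert F using 1
  rw [s1, s2]
  have key : W * (T₁ᴴ * K₁ * T₁ + T₂ᴴ * K₂ * T₂) * W = W - t • (W * W) := by
    have : W * (t • 1 + (T₁ᴴ * K₁ * T₁ + T₂ᴴ * K₂ * T₂)) * W = W := by rw [c1, one_mul]
    rw [mul_add, add_mul] at this
    simp only [mul_smul_comm, mul_one, smul_mul_assoc] at this
    rw [eq_sub_iff_add_eq']
    exact this
  have hWh : Wᴴ = W := hW
  simp only [mul_add, add_mul, mul_assoc] at key
  have key' := eq_sub_of_add_eq key
  simp only [conjTranspose_sub, conjTranspose_one, conjTranspose_smul, star_trivial, hWh, 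
    mul_add, add_mul, mul_sub, sub_mul, smul_mul_assoc, mul_smul_comm, mul_assoc, mul_one, one_mul, 
    smul_add, smul_sub, key', smul_smul]
  match_scalars <;> field_simp <;> ring

theorem aux_rpow_zero {K : Matrix (Fin n) (Fin n) ℂ} (hK : K.IsHermitian) :
    cfc (fun x : ℝ => x ^ (0 : ℝ)) K = 1 := by
  simp only [Real.rpow_zero]
  exact cfc_const_one ℝ K hK

theorem aux_rpow_one {K : Matrix (Fin n) (Fin n) ℂ} (hK : K.IsHermitian) :
    cfc (fun x : ℝ => x ^ (1 : ℝ)) K = K := by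
  simp only [Real.rpow_one]
  exact cfc_id' ℝ K hK

theorem aux_jensen {K₁ K₂ T₁ T₂ : Matrix (Fin n) (Fin n) ℂ} (h₁ : K₁.PosSemidef)
    (h₂ : K₂.PosSemidef) (hT : (1 - (T₁ᴴ * T₁ + T₂ᴴ * T₂)).PosSemidef) 
    {p : ℝ} (hp0 : 0 ≤ p) (hp1 : p ≤ 1) :
    (cfc (fun x : ℝ => x ^ p) (T₁ᴴ * K₁ * T₁ + T₂ᴴ * K₂ * T₂) -
      (T₁ᴴ * cfc (fun x : ℝ => x ^ p) K₁ * T₁ +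
        T₂ᴴ * cfc (fun x : ℝ => x ^ p) K₂ * T₂)).PosSemidef := by
  have hS : (T₁ᴴ * K₁ * T₁ + T₂ᴴ * K₂ * T₂).PosSemidef :=
    (h₁.conjTranspose_mul_mul_same T₁).add (h₂.conjTranspose_mul_mul_same T₂)
  rcases hp0.eq_or_lt with rfl | hp0
  · rw [aux_rpow_zero hS.1, aux_rpow_zero h₁.1, aux_rpow_zero h₂.1]
    simpa using hT
  rcases hp1.eq_or_lt with rfl | hp1
  · rw [aux_rpow_one hS.1, aux_rpow_one h₁.1, aux_rpow_one h₂.1, sub_self]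
    exact PosSemidef.zero
  have hherm : ∀ f : ℝ → ℝ, (cfc f (T₁ᴴ * K₁ * T₁ + T₂ᴴ * K₂ * T₂) -
      (T₁ᴴ * cfc f K₁ * T₁ + T₂ᴴ * cfc f K₂ * T₂)).IsHermitian := by
    intro f
    exact (aux_cfc_herm _ _).sub ((isHermitian_conjTranspose_mul_mul T₁ (aux_cfc_herm _ _)).add
      (isHermitian_conjTranspose_mul_mul T₂ (aux_cfc_herm _ _)))
  rw [aux_psd_iff (hherm _)]
  intro x
  obtain ⟨w₁, hw₁⟩ := aux_quad_cfc h₁.1 (T₁ *ᵥ x)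
  obtain ⟨w₂, hw₂⟩ := aux_quad_cfc h₂.1 (T₂ *ᵥ x)
  obtain ⟨w, hw⟩ := aux_quad_cfc hS.1 x
  have hq : ∀ f : ℝ → ℝ, aux_quad x (cfc f (T₁ᴴ * K₁ * T₁ + T₂ᴴ * K₂ * T₂) -
      (T₁ᴴ * cfc f K₁ * T₁ + T₂ᴴ * cfc f K₂ * T₂)) =
      ∑ i, f (hS.1.eigenvalues i) * w i - (∑ i, f (h₁.1.eigenvalues i) * w₁ i +
        ∑ i, f (h₂.1.eigenvalues i) * w₂ i) := by
    intro f
    rw [aux_quad_sub, aux_quad_add, aux_quad_conj, aux_quad_conj, hw, hw₁, hw₂]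
  obtain ⟨μ, hμ⟩ := Real.exists_measure_rpow_eq_integral_rpowIntegrand₀₁ (p := p) ⟨hp0, hp1⟩
  have hi : ∀ (e v : Fin n → ℝ), (∀ i, 0 ≤ e i) →
      IntegrableOn (fun t => ∑ i, Real.rpowIntegrand₀₁ p t (e i) * v i) (Set.Ioi 0) μ ∧
      ∑ i, (e i) ^ p * v i = ∫ t in Set.Ioi 0, ∑ i, Real.rpowIntegrand₀₁ p t (e i) * v i ∂μ := by
    intro e v he
    have h0 : ∀ i, IntegrableOn (fun t => Real.rpowIntegrand₀₁ p t (e i) * v i) (Set.Ioi 0) μ :=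
      fun i => (hμ (e i) (he i)).1.mul_const _
    refine ⟨integrable_finsetSum _ fun i _ => h0 i, ?_⟩
    rw [integral_finsetSum _ fun i _ => h0 i]
    refine Finset.sum_congr rfl fun i _ => ?_
    rw [integral_mul_const, ← (hμ (e i) (he i)).2]
  obtain ⟨i1, e1⟩ := hi _ w₁ h₁.eigenvalues_nonneg
  obtain ⟨i2, e2⟩ := hi _ w₂ h₂.eigenvalues_nonneg
  obtain ⟨i3, e3⟩ := hi _ w hS.eigenvalues_nonneg
  rw [hq, e1, e2, e3, ← integral_add i1 i2, sub_nonneg]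
  refine setIntegral_mono_on (i1.add i2) i3 measurableSet_Ioi fun t ht => ?_
  have := (aux_psd_iff (hherm _)).1 (aux_integrand h₁ h₂ hT ht p) x
  rw [hq] at this
  exact sub_nonneg.1 this

theorem aux_jensenN {K₁ K₂ M₁ M₂ N L : Matrix (Fin n) (Fin n) ℂ} (h₁ : K₁.PosSemidef)
    (h₂ : K₂.PosSemidef) (hN : IsUnit N) 
    (hM : (Nᴴ * N - (M₁ᴴ * M₁ + M₂ᴴ * M₂)).PosSemidef) 
    (hL : Nᴴ * L * N = M₁ᴴ * K₁ * M₁ + M₂ᴴ * K₂ * M₂)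
    {p : ℝ} (hp0 : 0 ≤ p) (hp1 : p ≤ 1) :
    (Nᴴ * cfc (fun x : ℝ => x ^ p) L * N -
      (M₁ᴴ * cfc (fun x : ℝ => x ^ p) K₁ * M₁ +
        M₂ᴴ * cfc (fun x : ℝ => x ^ p) K₂ * M₂)).PosSemidef := by
  obtain ⟨u, rfl⟩ := hN
  set N : Matrix (Fin n) (Fin n) ℂ := (u : Matrix (Fin n) (Fin n) ℂ)
  obtain ⟨V, hV1, hV2⟩ : ∃ V : Matrix (Fin n) (Fin n) ℂ, V * N = 1 ∧ N * V = 1 :=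
    ⟨_, u.inv_mul, u.mul_inv⟩
  have hc1 : Nᴴ * Vᴴ = 1 := by rw [← conjTranspose_mul, hV1, conjTranspose_one]
  have hc2 : Vᴴ * Nᴴ = 1 := by rw [← conjTranspose_mul, hV2, conjTranspose_one]
  have x1 : ∀ X, V * (N * X) = X := fun X => by rw [← mul_assoc, hV1, one_mul]
  have x2 : ∀ X, N * (V * X) = X := fun X => by rw [← mul_assoc, hV2, one_mul]
  have x3 : ∀ X, Nᴴ * (Vᴴ * X) = X := fun X => by rw [← mul_assoc, hc1, one_mul]
  have x4 : ∀ X, Vᴴ * (Nᴴ * X) = X := fun X => by rw [← mul_assoc, hc2, one_mul]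
  have hT : (1 - ((M₁ * V)ᴴ * (M₁ * V) + (M₂ * V)ᴴ * (M₂ * V))).PosSemidef := by
    convert hM.conjTranspose_mul_mul_same V using 1
    simp only [conjTranspose_mul, mul_sub, sub_mul, mul_add, add_mul, mul_assoc, x4, hV2]
  have hL' : L = (M₁ * V)ᴴ * K₁ * (M₁ * V) + (M₂ * V)ᴴ * K₂ * (M₂ * V) := by
    have : L = Vᴴ * (Nᴴ * L * N) * V := by simp only [mul_assoc, x4, hV2, mul_one]
    rw [this, hL]
    simp only [conjTranspose_mul, mul_add, add_mul, mul_assoc]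
  have := (aux_jensen h₁ h₂ hT hp0 hp1).conjTranspose_mul_mul_same N
  rw [← hL'] at this
  convert this using 1
  simp only [conjTranspose_mul, mul_sub, sub_mul, mul_add, add_mul, mul_assoc, x3, hV1, mul_one]

theorem aux_half {B : Matrix (Fin n) (Fin n) ℂ} (hB : B.PosDef) :
    ∃ H H' : Matrix (Fin n) (Fin n) ℂ, mpow B (1 / 2) = H ∧ mpow B (-(1 / 2)) = H' ∧
      H * H' = 1 ∧ H' * H = 1 ∧ H * H = B ∧ Hᴴ = H ∧ H'ᴴ = H' := by
  have hs : IsSelfAdjoint B := hB.1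
  refine ⟨_, _, mpow_eq_cfc _ _, mpow_eq_cfc _ _, ?_, ?_, ?_, aux_cfc_herm _ _, aux_cfc_herm _ _⟩
  · rw [aux_cfc_mul, ← cfc_const_one ℝ B hs]
    refine cfc_congr fun x hx => ?_
    have := aux_spec_pos hB x hx
    try simp only
    rw [← Real.rpow_add this]
    norm_num
  · rw [aux_cfc_mul, ← cfc_const_one ℝ B hs]
    refine cfc_congr fun x hx => ?_
    have := aux_spec_pos hB x hx
    try simp only
    rw [← Real.rpow_add this]
    norm_num
  · rw [aux_cfc_mul]
    nth_rewrite 2 [← cfc_id' ℝ B hs]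
    refine cfc_congr fun x hx => ?_
    have := aux_spec_pos hB x hx
    try simp only
    rw [← Real.rpow_add this]
    norm_num

theorem aux_isUnit_of {H H' : Matrix (Fin n) (Fin n) ℂ} (h : H * H' = 1) (h' : H' * H = 1) :
    IsUnit H := ⟨⟨H, H', h, h'⟩, rfl⟩

theorem aux_conj_pd {A H H' : Matrix (Fin n) (Fin n) ℂ} (hA : A.PosDef) (h : H * H' = 1)
    (h' : H' * H = 1) (hH : Hᴴ = H) : (H * A * H).PosDef := by
  have := (Matrix.IsUnit.posDef_star_left_conjugate_iff (x := A) (aux_isUnit_of h h')).2 hA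
  rwa [star_eq_conjTranspose, hH] at this

/-- scalar function of the power mean -/
noncomputable def aux_z (l p x : ℝ) : ℝ := (l * x ^ p + (1 - l)) ^ (1 / p)

theorem aux_base_pos {l p x : ℝ} (hl0 : 0 ≤ l) (hl1 : l ≤ 1) (hx : 0 < x) :
    0 < l * x ^ p + (1 - l) := by
  have h := Real.rpow_pos_of_pos hx p
  rcases hl0.eq_or_lt with rfl | h0
  · simp
  · have := mul_pos h0 h
    linarith

theorem aux_z_pos {l p x : ℝ} (hl0 : 0 ≤ l) (hl1 : l ≤ 1) (hx : 0 < x) : 0 < aux_z l p x :=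
  Real.rpow_pos_of_pos (aux_base_pos hl0 hl1 hx) _

theorem aux_inner (l p : ℝ) {C : Matrix (Fin n) (Fin n) ℂ} (hC : C.IsHermitian) :
    l • cfc (fun x : ℝ => x ^ p) C + (1 - l) • 1 = cfc (fun x : ℝ => l * x ^ p + (1 - l)) C := by
  have hs : IsSelfAdjoint C := hC
  rw [cfc_add_const (1 - l) (fun x : ℝ => l * x ^ p) C (aux_contSpec _ _) hs, aux_cfc_smul,
    Algebra.algebraMap_eq_smul_one]

theorem aux_persp_eq (l p : ℝ) {A B : Matrix (Fin n) (Fin n) ℂ}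
    (hC : (mpow B (-(1 / 2)) * A * mpow B (-(1 / 2))).IsHermitian) :
    persp2 l p A B = mpow B (1 / 2) *
      cfc (aux_z l p) (mpow B (-(1 / 2)) * A * mpow B (-(1 / 2))) * mpow B (1 / 2) := by
  unfold persp2
  generalize mpow B (-(1 / 2)) * A * mpow B (-(1 / 2)) = C at *
  have hs : IsSelfAdjoint C := hC
  congr 2
  rw [mpow_eq_cfc, mpow_eq_cfc, aux_inner l p hC,
    ← cfc_comp' (fun x : ℝ => x ^ (1 / p)) (fun x : ℝ => l * x ^ p + (1 - l)) C ?_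
      (aux_contSpec _ _) hs]
  · rfl
  · exact ((Matrix.finite_real_spectrum (A := C)).image _).continuousOn _

theorem aux_data {A B : Matrix (Fin n) (Fin n) ℂ} (hA : A.PosDef) (hB : B.PosDef) {l p : ℝ}
    (hl0 : 0 ≤ l) (hl1 : l ≤ 1) (hp : 0 < p) :
    ∃ M K K' : Matrix (Fin n) (Fin n) ℂ, IsUnit M ∧ K.PosSemidef ∧ K'.PosSemidef ∧
      Mᴴ * M = persp2 l p A B ∧ Mᴴ * K * M = A ∧ Mᴴ * K' * M = B ∧
      l • cfc (fun x : ℝ => x ^ p) K + (1 - l) • cfc (fun x : ℝ => x ^ p) K' = 1 := by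
  obtain ⟨H, H', e1, e2, a1, a2, a3, a4, a5⟩ := aux_half hB
  have hC : (H' * A * H').PosDef := aux_conj_pd hA a2 a1 a5
  have hpe := aux_persp_eq l p (A := A) (B := B) (by rw [e2]; exact hC.1)
  rw [e1, e2] at hpe
  have hA' : A = H * (H' * A * H') * H := by
    have x1 : ∀ X, H * (H' * X) = X := fun X => by rw [← mul_assoc, a1, one_mul]
    simp only [mul_assoc, x1, a2, mul_one]
  generalize hCC : H' * A * H' = C at *
  have hs : IsSelfAdjoint C := hC.1
  have hpos := aux_spec_pos hC
  have hz : ∀ x ∈ spectrum ℝ C, 0 < aux_z l p x := fun x hx => aux_z_pos hl0 hl1 (hpos x hx)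
  have hZ : (cfc (fun x => Real.sqrt (aux_z l p x)) C).PosDef :=
    aux_cfc_pd hC.1 fun x hx => Real.sqrt_pos.2 (hz x hx)
  have hZh : (cfc (fun x => Real.sqrt (aux_z l p x)) C)ᴴ =
    cfc (fun x => Real.sqrt (aux_z l p x)) C := hZ.1
  have hfin : ∀ f g : ℝ → ℝ, cfc g (cfc f C) = cfc (fun x => g (f x)) C := fun f g =>
    (cfc_comp' g f C (((Matrix.finite_real_spectrum (A := C)).image _).continuousOn _)
      (aux_contSpec _ _) hs).symm
  have conj : ∀ f : ℝ → ℝ, (cfc (fun x => Real.sqrt (aux_z l p x)) C * H)ᴴ * cfc f C *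
      (cfc (fun x => Real.sqrt (aux_z l p x)) C * H) =
      H * cfc (fun x => aux_z l p x * f x) C * H := by
    intro f
    have : cfc (fun x => aux_z l p x * f x) C = cfc (fun x => Real.sqrt (aux_z l p x)) C *
        cfc f C * cfc (fun x => Real.sqrt (aux_z l p x)) C := by
      rw [aux_cfc_mul, aux_cfc_mul]
      refine cfc_congr fun x hx => ?_
      have := Real.mul_self_sqrt (hz x hx).le
      try simp only
      linear_combination -(f x) * this
    rw [this, conjTranspose_mul, a4, hZh]
    simp only [mul_assoc]
  refine ⟨cfc (fun x => Real.sqrt (aux_z l p x)) C * H, cfc (fun x => x / aux_z l p x) C,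
    cfc (fun x => 1 / aux_z l p x) C, hZ.isUnit.mul (aux_isUnit_of a1 a2), ?_, ?_, ?_, ?_, ?_, ?_⟩
  · exact aux_cfc_psd hC.1 fun x hx => (div_pos (hpos x hx) (hz x hx)).le
  · exact aux_cfc_psd hC.1 fun x hx => (one_div_pos.2 (hz x hx)).le
  · have := conj (fun _ => 1)
    rw [cfc_const_one ℝ C hs, mul_one] at this
    rw [this, hpe]
    simp only [mul_one]
  · rw [conj, hA']
    congr 2
    refine Eq.trans (cfc_congr (g := fun x : ℝ => x) fun x hx => ?_) (cfc_id' ℝ C hs)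
    have := (hz x hx).ne'
    try simp only
    field_simp
  · rw [conj, ← a3]
    have e : cfc (fun x => aux_z l p x * (1 / aux_z l p x)) C = 1 := by
      refine Eq.trans (cfc_congr (g := fun _ : ℝ => (1 : ℝ)) fun x hx => ?_) (cfc_const_one ℝ C hs)
      have := (hz x hx).ne'
      try simp only
      field_simp
    rw [e, mul_one]
  · rw [hfin, hfin, ← aux_cfc_smul, ← aux_cfc_smul,
      ← cfc_add C _ _ (aux_contSpec _ C) (aux_contSpec _ C), ← cfc_const_one ℝ C hs]
    refine cfc_congr fun x hx => ?_
    have h1 := hz x hx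
    have h2 := hpos x hx
    have h3 := aux_base_pos (p := p) hl0 hl1 h2
    have h4 : aux_z l p x ^ p = l * x ^ p + (1 - l) := by
      unfold aux_z
      rw [← Real.rpow_mul h3.le, one_div_mul_cancel hp.ne', Real.rpow_one]
    try simp only
    rw [Real.div_rpow h2.le h1.le, Real.div_rpow zero_le_one h1.le, h4, Real.one_rpow]
    field_simp

theorem aux_persp_pd {A B : Matrix (Fin n) (Fin n) ℂ} (hA : A.PosDef) (hB : B.PosDef) {l p : ℝ}
    (hl0 : 0 ≤ l) (hl1 : l ≤ 1) (hp : 0 < p) : (persp2 l p A B).PosDef := by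
  obtain ⟨M, K, K', hM, -, -, h, -⟩ := aux_data hA hB hl0 hl1 hp
  rw [← h]
  have := (Matrix.IsUnit.posDef_star_left_conjugate_iff (x := 1) hM).2 PosDef.one
  rwa [star_eq_conjTranspose, mul_one] at this

theorem aux_compare {X N : Matrix (Fin n) (Fin n) ℂ} (hX : X.IsHermitian) (hN : IsUnit N) :
    ∃ c : ℝ, 1 ≤ c ∧ (c • (Nᴴ * N) - X).PosSemidef := by
  obtain ⟨u, rfl⟩ := hN
  set N : Matrix (Fin n) (Fin n) ℂ := (u : Matrix (Fin n) (Fin n) ℂ)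
  obtain ⟨V, hV1, hV2⟩ : ∃ V : Matrix (Fin n) (Fin n) ℂ, V * N = 1 ∧ N * V = 1 :=
    ⟨_, u.inv_mul, u.mul_inv⟩
  have hc1 : Nᴴ * Vᴴ = 1 := by rw [← conjTranspose_mul, hV1, conjTranspose_one]
  have x3 : ∀ X, Nᴴ * (Vᴴ * X) = X := fun X => by rw [← mul_assoc, hc1, one_mul]
  have hY : (Vᴴ * X * V).IsHermitian := isHermitian_conjTranspose_mul_mul V hX
  have hYs : IsSelfAdjoint (Vᴴ * X * V) := hY
  refine ⟨1 + ∑ i, |hY.eigenvalues i|, ?_, ?_⟩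
  · have : 0 ≤ ∑ i, |hY.eigenvalues i| := Finset.sum_nonneg fun i _ => abs_nonneg _
    linarith
  set c := 1 + ∑ i, |hY.eigenvalues i|
  have h1 : (cfc (fun x : ℝ => c - x) (Vᴴ * X * V)).PosSemidef := by
    refine aux_cfc_psd hY fun x hx => ?_
    rw [hY.spectrum_real_eq_range_eigenvalues] at hx
    obtain ⟨i, rfl⟩ := hx
    have := Finset.single_le_sum (f := fun i => |hY.eigenvalues i|) (fun i _ => abs_nonneg _)
      (Finset.mem_univ i)
    have h2 := le_abs_self (hY.eigenvalues i)
    simp only [c]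
    try simp only at this
    linarith
  rw [cfc_sub (fun _ => c) (fun x => x) _ (aux_contSpec _ _) (aux_contSpec _ _),
    cfc_const _ _ hYs, cfc_id' ℝ _ hYs, Algebra.algebraMap_eq_smul_one] at h1
  convert h1.conjTranspose_mul_mul_same N using 1
  simp only [mul_sub, sub_mul, mul_assoc, x3, hV1, mul_one, mul_smul_comm, smul_mul_assoc]

theorem aux_rpow_smul {K : Matrix (Fin n) (Fin n) ℂ} (hK : K.PosSemidef) {c : ℝ} (hc : 0 ≤ c)
    (p : ℝ) : cfc (fun x : ℝ => x ^ p) (c • K) = c ^ p • cfc (fun x : ℝ => x ^ p) K := by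
  have hs : IsSelfAdjoint K := hK.1
  rw [← aux_cfc_smul, ← cfc_comp_const_mul c (fun x : ℝ => x ^ p) K
    (((Matrix.finite_real_spectrum (A := K)).image _).continuousOn _) hs]
  refine cfc_congr fun x hx => ?_
  exact Real.mul_rpow hc (aux_spec_nonneg hK x hx)

theorem aux_step {p l α c : ℝ} (hp0 : 0 < p) (hp1 : p ≤ 1) (hl0 : 0 ≤ l) (hl1 : l ≤ 1)
    (hα0 : 0 ≤ α) (hα1 : α ≤ 1) (hc : 0 < c)
    {M₁ M₂ N K₁ K₁' K₂ K₂' L L' : Matrix (Fin n) (Fin n) ℂ} (hN : IsUnit N)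
    (h1 : K₁.PosSemidef) (h1' : K₁'.PosSemidef) (h2 : K₂.PosSemidef) (h2' : K₂'.PosSemidef)
    (hL : L.PosSemidef) (hL' : L'.PosSemidef)
    (e1 : l • cfc (fun x : ℝ => x ^ p) K₁ + (1 - l) • cfc (fun x : ℝ => x ^ p) K₁' = 1)
    (e2 : l • cfc (fun x : ℝ => x ^ p) K₂ + (1 - l) • cfc (fun x : ℝ => x ^ p) K₂' = 1)
    (e3 : l • cfc (fun x : ℝ => x ^ p) L + (1 - l) • cfc (fun x : ℝ => x ^ p) L' = 1)
    (hA : Nᴴ * L * N = α • (M₁ᴴ * K₁ * M₁) + (1 - α) • (M₂ᴴ * K₂ * M₂))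
    (hB : Nᴴ * L' * N = α • (M₁ᴴ * K₁' * M₁) + (1 - α) • (M₂ᴴ * K₂' * M₂))
    (h : (c • (Nᴴ * N) - (α • (M₁ᴴ * M₁) + (1 - α) • (M₂ᴴ * M₂))).PosSemidef) :
    (c ^ (1 - p) • (Nᴴ * N) - (α • (M₁ᴴ * M₁) + (1 - α) • (M₂ᴴ * M₂))).PosSemidef := by
  have conj : ∀ (r : ℝ) (hr : 0 ≤ r) (M X : Matrix (Fin n) (Fin n) ℂ),
      (Real.sqrt r • M)ᴴ * X * (Real.sqrt r • M) = r • (Mᴴ * X * M) := by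
    intro r hr M X
    simp only [conjTranspose_smul, star_trivial, smul_mul_assoc, mul_smul_comm, smul_smul,
      Real.mul_self_sqrt hr]
  have conj' : ∀ (r : ℝ) (hr : 0 ≤ r) (M : Matrix (Fin n) (Fin n) ℂ),
      (Real.sqrt r • M)ᴴ * (Real.sqrt r • M) = r • (Mᴴ * M) := by
    intro r hr M
    simpa using conj r hr M 1
  have hα1' : 0 ≤ 1 - α := by linarith
  have hcN : IsUnit (Real.sqrt c • N) := by
    have : Real.sqrt c ≠ 0 := (Real.sqrt_pos.2 hc).ne'
    obtain ⟨u, rfl⟩ := hN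
    exact ⟨Units.mk0 _ this • u, rfl⟩
  have hM : ((Real.sqrt c • N)ᴴ * (Real.sqrt c • N) -
      ((Real.sqrt α • M₁)ᴴ * (Real.sqrt α • M₁) +
        (Real.sqrt (1 - α) • M₂)ᴴ * (Real.sqrt (1 - α) • M₂))).PosSemidef := by
    rw [conj' c hc.le, conj' α hα0, conj' _ hα1']
    exact h
  have P := aux_jensenN (L := c⁻¹ • L) h1 h2 hcN hM (by
    rw [conj c hc.le, conj α hα0, conj _ hα1', mul_smul_comm, smul_mul_assoc, smul_smul,
      mul_inv_cancel₀ hc.ne', one_smul, hA]) hp0.le hp1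
  have P' := aux_jensenN (L := c⁻¹ • L') h1' h2' hcN hM (by
    rw [conj c hc.le, conj α hα0, conj _ hα1', mul_smul_comm, smul_mul_assoc, smul_smul,
      mul_inv_cancel₀ hc.ne', one_smul, hB]) hp0.le hp1
  rw [conj c hc.le, conj α hα0, conj _ hα1', aux_rpow_smul hL (inv_nonneg.2 hc.le)] at P
  rw [conj c hc.le, conj α hα0, conj _ hα1', aux_rpow_smul hL' (inv_nonneg.2 hc.le)] at P'
  have F := (P.smul hl0).add (P'.smul (sub_nonneg.2 hl1))
  have hcc : c ^ (1 - p) = c * c⁻¹ ^ p := by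
    rw [Real.rpow_sub hc, Real.rpow_one, Real.inv_rpow hc.le]
    rfl
  convert F using 1
  have expand : ∀ M X Y : Matrix (Fin n) (Fin n) ℂ, l • X + (1 - l) • Y = 1 →
      Mᴴ * M = l • (Mᴴ * X * M) + (1 - l) • (Mᴴ * Y * M) := by
    intro M X Y hXY
    have : Mᴴ * M = Mᴴ * (l • X + (1 - l) • Y) * M := by rw [hXY, mul_one]
    rw [this]
    simp only [mul_add, add_mul, mul_smul_comm, smul_mul_assoc]
  rw [expand N _ _ e3, expand M₁ _ _ e1, expand M₂ _ _ e2, hcc]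
  simp only [mul_smul_comm, smul_mul_assoc]
  module

theorem aux_persp_concave {p l α : ℝ} (hp0 : 0 < p) (hp1 : p ≤ 1) (hl0 : 0 ≤ l) (hl1 : l ≤ 1)
    (hα0 : 0 ≤ α) (hα1 : α ≤ 1) {A₁ A₂ B₁ B₂ : Matrix (Fin n) (Fin n) ℂ}
    (hA₁ : A₁.PosDef) (hA₂ : A₂.PosDef) (hB₁ : B₁.PosDef) (hB₂ : B₂.PosDef)
    (hA : (α • A₁ + (1 - α) • A₂).PosDef) (hB : (α • B₁ + (1 - α) • B₂).PosDef) :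
    (persp2 l p (α • A₁ + (1 - α) • A₂) (α • B₁ + (1 - α) • B₂) -
      (α • persp2 l p A₁ B₁ + (1 - α) • persp2 l p A₂ B₂)).PosSemidef := by
  obtain ⟨M₁, K₁, K₁', u1, p1, p1', g1, a1, b1, e1⟩ := aux_data hA₁ hB₁ hl0 hl1 hp0
  obtain ⟨M₂, K₂, K₂', u2, p2, p2', g2, a2, b2, e2⟩ := aux_data hA₂ hB₂ hl0 hl1 hp0
  obtain ⟨N, L, L', u3, p3, p3', g3, a3, b3, e3⟩ := aux_data hA hB hl0 hl1 hp0
  rw [← g1, ← g2, ← g3]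
  have hX : (α • (M₁ᴴ * M₁) + (1 - α) • (M₂ᴴ * M₂)).IsHermitian :=
    (((posSemidef_conjTranspose_mul_self M₁).smul hα0).add
      ((posSemidef_conjTranspose_mul_self M₂).smul (sub_nonneg.2 hα1))).1
  have hNN := (posSemidef_conjTranspose_mul_self N).1
  obtain ⟨c, hc, hcX⟩ := aux_compare hX u3
  have hc0 : 0 < c := by linarith
  have it : ∀ k : ℕ, (c ^ ((1 - p) ^ k) • (Nᴴ * N) -
      (α • (M₁ᴴ * M₁) + (1 - α) • (M₂ᴴ * M₂))).PosSemidef := by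
    intro k
    induction k with
    | zero => simpa using hcX
    | succ k ih =>
      have := aux_step hp0 hp1 hl0 hl1 hα0 hα1 (Real.rpow_pos_of_pos hc0 _) u3 p1 p1' p2 p2'
        p3 p3' e1 e2 e3 (by rw [a3, a1, a2]) (by rw [b3, b1, b2]) ih
      rwa [← Real.rpow_mul hc0.le, ← pow_succ] at this
  rw [aux_psd_iff (hNN.sub hX)]
  intro x
  rw [aux_quad_sub]
  have h0 : ∀ k : ℕ, 0 ≤ c ^ ((1 - p) ^ k) * aux_quad x (Nᴴ * N) -
      aux_quad x (α • (M₁ᴴ * M₁) + (1 - α) • (M₂ᴴ * M₂)) := by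
    intro k
    have := (aux_psd_iff (it k).1).1 (it k) x
    rwa [aux_quad_sub, aux_quad_smul] at this
  have lim1 : Filter.Tendsto (fun k : ℕ => c ^ ((1 - p) ^ k)) Filter.atTop (nhds 1) := by
    have := (tendsto_pow_atTop_nhds_zero_of_lt_one (r := 1 - p) (by linarith) (by linarith))
    have h2 := (Real.continuous_const_rpow hc0.ne').continuousAt.tendsto.comp this
    simpa [Function.comp_def] using h2
  have lim := (lim1.mul_const (aux_quad x (Nᴴ * N))).sub_const
    (aux_quad x (α • (M₁ᴴ * M₁) + (1 - α) • (M₂ᴴ * M₂)))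
  rw [one_mul] at lim
  exact ge_of_tendsto' lim h0

theorem aux_rpow_mono {X Y : Matrix (Fin n) (Fin n) ℂ} (hX : X.PosDef) (hY : Y.PosDef)
    (h : (Y - X).PosSemidef) {p : ℝ} (hp0 : 0 ≤ p) (hp1 : p ≤ 1) :
    (cfc (fun x : ℝ => x ^ (1 - p)) Y - cfc (fun x : ℝ => x ^ (1 - p)) X).PosSemidef := by
  have gen : ∀ {X : Matrix (Fin n) (Fin n) ℂ}, X.PosDef →
      (cfc Real.sqrt X)ᴴ = cfc Real.sqrt X ∧ IsUnit (cfc Real.sqrt X) ∧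
      cfc Real.sqrt X * cfc Real.sqrt X = X ∧ (cfc (fun x : ℝ => x⁻¹) X).PosSemidef ∧
      cfc Real.sqrt X * cfc (fun x : ℝ => x⁻¹) X * cfc Real.sqrt X = 1 ∧
      cfc Real.sqrt X * cfc (fun x : ℝ => x ^ p) (cfc (fun x : ℝ => x⁻¹) X) * cfc Real.sqrt X
        = cfc (fun x : ℝ => x ^ (1 - p)) X := by
    intro X hX
    have hs : IsSelfAdjoint X := hX.1
    have hpos := aux_spec_pos hX
    refine ⟨aux_cfc_herm _ _, (aux_cfc_pd hX.1 fun x hx => Real.sqrt_pos.2 (hpos x hx)).isUnit, ?_,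
      aux_cfc_psd hX.1 fun x hx => (inv_pos.2 (hpos x hx)).le, ?_, ?_⟩
    · rw [aux_cfc_mul]
      nth_rewrite 2 [← cfc_id' ℝ X hs]
      exact cfc_congr fun x hx => Real.mul_self_sqrt (hpos x hx).le
    · rw [aux_cfc_mul, aux_cfc_mul, ← cfc_const_one ℝ X hs]
      refine cfc_congr fun x hx => ?_
      have h1 := Real.mul_self_sqrt (hpos x hx).le
      have h2 := (hpos x hx).ne'
      try simp only
      field_simp
      rw [sq, h1]
    · rw [← cfc_comp' (fun x : ℝ => x ^ p) (fun x : ℝ => x⁻¹) X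
        (((Matrix.finite_real_spectrum (A := X)).image _).continuousOn _) (aux_contSpec _ _) hs,
        aux_cfc_mul, aux_cfc_mul]
      refine cfc_congr fun x hx => ?_
      have h1 := Real.mul_self_sqrt (hpos x hx).le
      try simp only
      rw [Real.rpow_sub (hpos x hx), Real.rpow_one, Real.inv_rpow (hpos x hx).le, div_eq_mul_inv]
      linear_combination (x ^ p)⁻¹ * h1
  obtain ⟨a1, a2, a3, a4, a5, a6⟩ := gen hX
  obtain ⟨b1, b2, b3, b4, b5, b6⟩ := gen hY
  have := aux_jensenN (K₁ := cfc (fun x : ℝ => x⁻¹) X) (K₂ := 0) (M₁ := cfc Real.sqrt X) (M₂ := 0)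
    (N := cfc Real.sqrt Y) (L := cfc (fun x : ℝ => x⁻¹) Y) a4 PosSemidef.zero b2
    (by rw [a1, b1, a3, b3]; simpa using h) (by rw [a1, b1, a5, b5]; simp) hp0 hp1
  rw [a1, b1, a6, b6] at this
  simpa using this

theorem aux_rpow_concave {X Y : Matrix (Fin n) (Fin n) ℂ} (hX : X.PosSemidef) (hY : Y.PosSemidef)
    {p α : ℝ} (hp0 : 0 ≤ p) (hp1 : p ≤ 1) (hα0 : 0 ≤ α) (hα1 : α ≤ 1) :
    (cfc (fun x : ℝ => x ^ p) (α • X + (1 - α) • Y) -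
      (α • cfc (fun x : ℝ => x ^ p) X + (1 - α) • cfc (fun x : ℝ => x ^ p) Y)).PosSemidef := by
  have h1 := Real.mul_self_sqrt hα0
  have h2 := Real.mul_self_sqrt (sub_nonneg.2 hα1)
  have := aux_jensen (T₁ := Real.sqrt α • 1) (T₂ := Real.sqrt (1 - α) • 1) hX hY (by
    simp only [conjTranspose_smul, star_trivial, conjTranspose_one, smul_mul_assoc, mul_smul_comm,
      one_mul, smul_smul, h1, h2, ← add_smul]
    simpa using PosSemidef.zero) hp0 hp1
  simpa only [conjTranspose_smul, star_trivial, conjTranspose_one, smul_mul_assoc, mul_smul_comm,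
      one_mul, mul_one, smul_smul, h1, h2] using this

theorem aux_integrand_concave {p l α : ℝ} (hp0 : 0 < p) (hp1 : p ≤ 1) (hl0 : 0 ≤ l) (hl1 : l ≤ 1)
    (hα0 : 0 ≤ α) (hα1 : α ≤ 1) {A₁ A₂ B₁ B₂ : Matrix (Fin n) (Fin n) ℂ}
    (hA₁ : A₁.PosDef) (hA₂ : A₂.PosDef) (hB₁ : B₁.PosDef) (hB₂ : B₂.PosDef)
    (hA : (α • A₁ + (1 - α) • A₂).PosDef) (hB : (α • B₁ + (1 - α) • B₂).PosDef) :
    (mpow (persp2 l p (α • A₁ + (1 - α) • A₂) (α • B₁ + (1 - α) • B₂)) (1 - p) -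
      (α • mpow (persp2 l p A₁ B₁) (1 - p) +
        (1 - α) • mpow (persp2 l p A₂ B₂) (1 - p))).PosSemidef := by
  have h := aux_persp_concave hp0 hp1 hl0 hl1 hα0 hα1 hA₁ hA₂ hB₁ hB₂ hA hB
  have q := aux_persp_pd hA hB hl0 hl1 hp0
  have q1 := aux_persp_pd hA₁ hB₁ hl0 hl1 hp0
  have q2 := aux_persp_pd hA₂ hB₂ hl0 hl1 hp0
  generalize persp2 l p (α • A₁ + (1 - α) • A₂) (α • B₁ + (1 - α) • B₂) = G at *
  generalize persp2 l p A₁ B₁ = G₁ at *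
  generalize persp2 l p A₂ B₂ = G₂ at *
  have hG : (α • G₁ + (1 - α) • G₂).PosDef := by
    rcases hα0.eq_or_lt with rfl | h0
    · simpa using q2
    · exact (q1.smul h0).add_posSemidef (q2.posSemidef.smul (sub_nonneg.2 hα1))
  simp only [mpow_eq_cfc]
  have := (aux_rpow_mono hG q h hp0.le hp1).add (aux_rpow_concave q1.posSemidef q2.posSemidef
    (p := 1 - p) (by linarith) (by linarith) hα0 hα1)
  simpa using this

/-- integrability in a normed space, with the topology of the norm -/
abbrev auxIntOn {E : Type*} [NormedAddCommGroup E] (f : ℝ → E) (s : Set ℝ) : Prop :=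
  IntegrableOn f s

theorem auxIntOn_of_cont {E : Type*} [NormedAddCommGroup E] {f : ℝ → E}
    (h : ContinuousOn f (Set.Icc 0 1)) : auxIntOn f (Set.Icc 0 1) :=
  h.integrableOn_compact isCompact_Icc

theorem aux_lin {E F : Type*} [NormedAddCommGroup E] [NormedSpace ℝ E] [FiniteDimensional ℝ E]
    [NormedAddCommGroup F] [NormedSpace ℝ F] [FiniteDimensional ℝ F]
    {f : ℝ → E} {s : Set ℝ} (hf : auxIntOn f s) (L : E →ₗ[ℝ] F) :
    ∫ l in s, L (f l) = L (∫ l in s, f l) :=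
  have : CompleteSpace E := FiniteDimensional.complete ℝ E
  have : CompleteSpace F := FiniteDimensional.complete ℝ F
  (LinearMap.toContinuousLinearMap L).integral_comp_comm hf

theorem aux_comb {E : Type*} [NormedAddCommGroup E] [NormedSpace ℝ E]
    {f g h : ℝ → E} {s : Set ℝ} (hf : auxIntOn f s) (hg : auxIntOn g s) (hh : auxIntOn h s)
    (a b : ℝ) :
    auxIntOn (fun l => f l - (a • g l + b • h l)) s ∧
    ∫ l in s, (f l - (a • g l + b • h l)) =
      (∫ l in s, f l) - (a • (∫ l in s, g l) + b • ∫ l in s, h l) := by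
  have hg' : Integrable (fun l => a • g l) (volume.restrict s) := Integrable.smul a hg
  have hh' : Integrable (fun l => b • h l) (volume.restrict s) := Integrable.smul b hh
  have hgh : Integrable (fun l => a • g l + b • h l) (volume.restrict s) := hg'.add hh'
  refine ⟨Integrable.sub hf hgh, ?_⟩
  rw [integral_sub hf hgh, integral_add hg' hh', integral_smul, integral_smul]

theorem aux_integrand_cont {p : ℝ} (hp0 : 0 < p) {A B : Matrix (Fin n) (Fin n) ℂ}
    (hA : A.PosDef) (hB : B.PosDef) :
    ContinuousOn (fun l : ℝ => mpow (persp2 l p A B) (1 - p)) (Set.Icc 0 1) := by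
  simp only [mpow_eq_cfc]
  refine aux_cont ?_ (fun l hl => aux_persp_pd hA hB hl.1 hl.2 hp0) (1 - p)
  unfold persp2
  have hC : (mpow B (-(1 / 2)) * A * mpow B (-(1 / 2))).PosDef := by
    obtain ⟨H, H', e1, e2, a1, a2, a3, a4, a5⟩ := aux_half hB
    rw [e2]
    exact aux_conj_pd hA a2 a1 a5
  generalize mpow B (-(1 / 2)) * A * mpow B (-(1 / 2)) = C at *
  refine ContinuousOn.mul (ContinuousOn.mul continuousOn_const ?_) continuousOn_const
  simp only [mpow_eq_cfc]
  refine aux_cont ?_ (fun l hl => ?_) (1 / p)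
  · exact ((continuous_id.smul continuous_const).add
      ((continuous_const.sub continuous_id).smul continuous_const)).continuousOn
  · rw [aux_inner l p hC.1]
    exact aux_cfc_pd hC.1 fun x hx => aux_base_pos hl.1 hl.2 (aux_spec_pos hC x hx)

theorem aux_integrand_int {p : ℝ} (hp0 : 0 < p) {A B : Matrix (Fin n) (Fin n) ℂ}
    (hA : A.PosDef) (hB : B.PosDef) :
    auxIntOn (fun l : ℝ => mpow (persp2 l p A B) (1 - p)) (Set.Icc 0 1) :=
  auxIntOn_of_cont (aux_integrand_cont hp0 hA hB)

/-- quadratic form as a linear map -/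
noncomputable def aux_quadL (x : Fin n → ℂ) : Matrix (Fin n) (Fin n) ℂ →ₗ[ℝ] ℝ where
  toFun := aux_quad x
  map_add' := aux_quad_add x
  map_smul' := aux_quad_smul x

theorem aux_integral_psd {D : ℝ → Matrix (Fin n) (Fin n) ℂ} {s : Set ℝ} (hs : MeasurableSet s)
    (hD : auxIntOn D s)
    (h : ∀ l ∈ s, (D l).PosSemidef) : (∫ l in s, D l).PosSemidef := by
  have herm : (∫ l in s, D l).IsHermitian := by
    let L : Matrix (Fin n) (Fin n) ℂ →ₗ[ℝ] Matrix (Fin n) (Fin n) ℂ :=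
      { toFun := fun X => Xᴴ
        map_add' := fun X Y => conjTranspose_add X Y
        map_smul' := fun c X => by simp }
    have e := aux_lin hD L
    have e2 : ∫ l in s, L (D l) = ∫ l in s, D l :=
      setIntegral_congr_fun hs fun l hl => (h l hl).1
    rw [e2] at e
    exact e.symm
  rw [aux_psd_iff herm]
  intro x
  have e := aux_lin hD (aux_quadL x)
  change _ = aux_quad x _ at e
  rw [← e]
  exact setIntegral_nonneg hs fun l hl => (aux_psd_iff (h l hl).1).1 (h l hl) x

theorem aux_conv_pd {X Y : Matrix (Fin n) (Fin n) ℂ} (hX : X.PosDef) (hY : Y.PosDef) {α : ℝ}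
    (h0 : 0 ≤ α) (h1 : α ≤ 1) : (α • X + (1 - α) • Y).PosDef := by
  rcases h0.eq_or_lt with rfl | h0
  · simpa using hY
  · exact (hX.smul h0).add_posSemidef (hY.posSemidef.smul (sub_nonneg.2 h1))

theorem aux_main {p α : ℝ} (hp0 : 0 < p) (hp1 : p ≤ 1)
    (hα0 : 0 ≤ α) (hα1 : α ≤ 1) {A₁ A₂ B₁ B₂ : Matrix (Fin n) (Fin n) ℂ}
    (hA₁ : A₁.PosDef) (hA₂ : A₂.PosDef) (hB₁ : B₁.PosDef) (hB₂ : B₂.PosDef) :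
      (F2map p (α • A₁ + (1 - α) • A₂) (α • B₁ + (1 - α) • B₂) -
        (α • F2map p A₁ B₁ + (1 - α) • F2map p A₂ B₂)).PosSemidef := by
  have hA := aux_conv_pd hA₁ hA₂ hα0 hα1
  have hB := aux_conv_pd hB₁ hB₂ hα0 hα1
  have i := aux_integrand_int hp0 hA hB
  have i1 := aux_integrand_int hp0 hA₁ hB₁
  have i2 := aux_integrand_int hp0 hA₂ hB₂
  obtain ⟨j, e⟩ := aux_comb i i1 i2 α (1 - α)
  have key := aux_integral_psd measurableSet_Icc j
    fun l hl => aux_integrand_concave hp0 hp1 hl.1 hl.2 hα0 hα1 hA₁ hA₂ hB₁ hB₂ hA hB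
  rw [e] at key
  have := key.smul (one_div_pos.2 hp0).le
  convert this using 1
  unfold F2map
  module

theorem aux_mpow_smul (s q : ℝ) :
    mpow (s • (1 : Matrix (Fin n) (Fin n) ℂ)) q = (s ^ q) • 1 := by
  rw [mpow_eq_cfc, ← Algebra.algebraMap_eq_smul_one, cfc_algebraMap,
    Algebra.algebraMap_eq_smul_one]

theorem aux_scalar {p s t l : ℝ} (hp0 : 0 < p) (hs : 0 < s) (ht : 0 < t) (hl0 : 0 ≤ l)
    (hl1 : l ≤ 1) :
    mpow (persp2 l p (s • (1 : Matrix (Fin n) (Fin n) ℂ)) (t • 1)) (1 - p) =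
      ((l * s ^ p + (1 - l) * t ^ p) ^ (1 / p - 1)) • 1 := by
  unfold persp2
  simp only [aux_mpow_smul, smul_mul_assoc, mul_smul_comm, one_mul, mul_one, smul_smul, ← add_smul]
  congr 1
  have e1 : t ^ (-(1 / 2) : ℝ) * s * t ^ (-(1 / 2) : ℝ) = s / t := by
    have : t ^ (-(1 / 2) : ℝ) * t ^ (-(1 / 2) : ℝ) = t⁻¹ := by
      rw [← Real.rpow_add ht, ← Real.rpow_neg_one]; norm_num
    rw [mul_right_comm, this, div_eq_mul_inv, mul_comm]
  have e2 : ∀ y : ℝ, t ^ (1 / 2 : ℝ) * y * t ^ (1 / 2 : ℝ) = t * y := by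
    intro y
    have : t ^ (1 / 2 : ℝ) * t ^ (1 / 2 : ℝ) = t := by
      rw [← Real.rpow_add ht]; norm_num
    linear_combination y * this
  have hst : 0 < s / t := div_pos hs ht
  have hb := aux_base_pos (p := p) hl0 hl1 hst
  have htp := Real.rpow_pos_of_pos ht p
  have e3 : t * (l * (s / t) ^ p + (1 - l)) ^ (1 / p) =
      (l * s ^ p + (1 - l) * t ^ p) ^ (1 / p) := by
    have : l * s ^ p + (1 - l) * t ^ p = t ^ p * (l * (s / t) ^ p + (1 - l)) := by
      rw [Real.div_rpow hs.le ht.le]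
      field_simp
    rw [this, Real.mul_rpow htp.le hb.le, ← Real.rpow_mul ht.le, mul_one_div_cancel hp0.ne',
      Real.rpow_one]
  have hnn : 0 ≤ l * s ^ p + (1 - l) * t ^ p := by
    have := Real.rpow_pos_of_pos hs p
    have := sub_nonneg.2 hl1
    positivity
  have e4 : t ^ (1 / 2 : ℝ) * (l * (t ^ (-(1 / 2) : ℝ) * s * t ^ (-(1 / 2) : ℝ)) ^ p + (1 - l)) ^ (1 / p)
      * t ^ (1 / 2 : ℝ) = (l * s ^ p + (1 - l) * t ^ p) ^ (1 / p) := by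
    rw [e1, e2, e3]
  have e5 : ((l * s ^ p + (1 - l) * t ^ p) ^ (1 / p)) ^ (1 - p) =
      (l * s ^ p + (1 - l) * t ^ p) ^ (1 / p - 1) := by
    rw [← Real.rpow_mul hnn]
    congr 1
    field_simp
  rw [← e5, ← e4]
  congr 1
  ring_nf

theorem aux_F2_scalar {p s t : ℝ} (hp0 : 0 < p) (hs : 0 < s) (ht : 0 < t) :
    F2map p (s • (1 : Matrix (Fin n) (Fin n) ℂ)) (t • 1) =
      ((1 / p) * ∫ l in (0 : ℝ)..1, (l * s ^ p + (1 - l) * t ^ p) ^ (1 / p - 1)) • 1 := by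
  unfold F2map
  rw [setIntegral_congr_fun measurableSet_Icc
    (fun l hl => aux_scalar (n := n) hp0 hs ht hl.1 hl.2), integral_smul_const, smul_smul,
    integral_Icc_eq_integral_Ioc, intervalIntegral.integral_of_le zero_le_one]

theorem aux_ftc {p s t : ℝ} (hp0 : 0 < p) (hs : 0 < s) (ht : 0 < t) (hst : s ≠ t) :
    (1 / p) * ∫ l in (0 : ℝ)..1, (l * s ^ p + (1 - l) * t ^ p) ^ (1 / p - 1) =
      (s - t) / (s ^ p - t ^ p) := by
  have hsp := Real.rpow_pos_of_pos hs p
  have htp := Real.rpow_pos_of_pos ht p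
  have hne : s ^ p - t ^ p ≠ 0 := by
    intro h
    exact hst ((Real.rpow_left_inj hs.le ht.le hp0.ne').1 (sub_eq_zero.1 h))
  have hpos : ∀ l ∈ Set.uIcc (0 : ℝ) 1, 0 < l * s ^ p + (1 - l) * t ^ p := by
    intro l hl
    rw [Set.uIcc_of_le zero_le_one] at hl
    rcases hl.1.eq_or_lt with rfl | h0
    · simpa using htp
    · have := sub_nonneg.2 hl.2
      positivity
  have hd : ∀ l ∈ Set.uIcc (0 : ℝ) 1,
      HasDerivAt (fun l : ℝ => (l * s ^ p + (1 - l) * t ^ p) ^ (1 / p))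
        ((s ^ p - t ^ p) * (1 / p) * (l * s ^ p + (1 - l) * t ^ p) ^ (1 / p - 1)) l := by
    intro l hl
    have h1 : HasDerivAt (fun l : ℝ => l * s ^ p + (1 - l) * t ^ p) (s ^ p - t ^ p) l := by
      have := ((hasDerivAt_id l).mul_const (s ^ p)).add
        (((hasDerivAt_id l).const_sub 1).mul_const (t ^ p))
      refine this.congr_deriv ?_
      ring
    exact h1.rpow_const (Or.inl (hpos l hl).ne')
  have hc : ContinuousOn (fun l : ℝ => (s ^ p - t ^ p) * (1 / p) *
      (l * s ^ p + (1 - l) * t ^ p) ^ (1 / p - 1)) (Set.uIcc 0 1) := by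
    refine continuousOn_const.mul (ContinuousOn.rpow_const (by fun_prop) ?_)
    exact fun l hl => Or.inl (hpos l hl).ne'
  have key := intervalIntegral.integral_eq_sub_of_hasDerivAt hd hc.intervalIntegrable
  have hs' : (s ^ p) ^ p⁻¹ = s := Real.rpow_rpow_inv hs.le hp0.ne'
  have ht' : (t ^ p) ^ p⁻¹ = t := Real.rpow_rpow_inv ht.le hp0.ne'
  rw [intervalIntegral.integral_const_mul] at key
  simp only [one_mul, zero_mul, sub_self, sub_zero, add_zero, zero_add, one_div, hs', ht'] at key
  rw [eq_div_iff hne, ← key, one_div]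
  ring

theorem aux_diag {p t : ℝ} (hp0 : 0 < p) (ht : 0 < t) :
    (1 / p) * ∫ l in (0 : ℝ)..1, (l * t ^ p + (1 - l) * t ^ p) ^ (1 / p - 1) =
      (1 / p) * t ^ (1 - p) := by
  have : ∀ l : ℝ, (l * t ^ p + (1 - l) * t ^ p) ^ (1 / p - 1) = t ^ (1 - p) := by
    intro l
    have : l * t ^ p + (1 - l) * t ^ p = t ^ p := by ring
    rw [this, ← Real.rpow_mul ht.le]
    congr 1
    field_simp
  simp only [this, intervalIntegral.integral_const, sub_zero, one_smul]

end aux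

theorem stmt17 (p : ℝ) (hp0 : 0 < p) (hp1 : p ≤ 1) :
    (∀ (n : ℕ) (A₁ A₂ B₁ B₂ : Matrix (Fin n) (Fin n) ℂ),
      A₁.PosDef → A₂.PosDef → B₁.PosDef → B₂.PosDef →
      ∀ α : ℝ, 0 ≤ α → α ≤ 1 →
      (F2map p (α • A₁ + (1 - α) • A₂) (α • B₁ + (1 - α) • B₂) -
        (α • F2map p A₁ B₁ + (1 - α) • F2map p A₂ B₂)).PosSemidef) ∧
    (∀ s t : ℝ, 0 < s → 0 < t → s ≠ t →
      F2map p (s • (1 : Matrix (Fin 1) (Fin 1) ℂ)) (t • 1) =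
        ((s - t) / (s ^ p - t ^ p)) • 1) ∧
    (∀ t : ℝ, 0 < t →
      F2map p (t • (1 : Matrix (Fin 1) (Fin 1) ℂ)) (t • 1) =
        ((1 / p) * t ^ (1 - p)) • 1) := by
  refine ⟨fun n A₁ A₂ B₁ B₂ h1 h2 h3 h4 α h0 h1' => aux_main hp0 hp1 h0 h1' h1 h2 h3 h4,
    fun s t hs ht hst => ?_, fun t ht => ?_⟩
  · rw [aux_F2_scalar hp0 hs ht, aux_ftc hp0 hs ht hst]
  · rw [aux_F2_scalar hp0 ht ht, aux_diag hp0 ht]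
end
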